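/- Let n ≥ 4. Then rank(PORD_n) = n² − n + 1. -/

import Mathlib

/-!
Partial transformations on the chain X_n = {1 < 2 < ... < n}, encoded as
functions `ℕ → Option ℕ` (with `none` meaning "undefined"), composed
left-to-right: `x(αβ) = (xα)β`.
-/

namespace OrientedPT

noncomputable section
open scoped Classical

/-- A partial transformation, as a partial map on `ℕ`. -/
def PTrans : Type := ℕ → Option ℕ

instance : Mul PTrans := ⟨fun f g x => (f x).bind g⟩

theorem mul_apply (f g : PTrans) (x : ℕ) : (f * g) x = (f x).bind g := rfl

instance : Semigroup PTrans where
  mul_assoc f g h := by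
    funext x
    show ((f x).bind g).bind h = (f x).bind (fun y => (g y).bind h)
    cases f x <;> rfl

/-- The domain of a partial transformation. -/
def domSet (f : PTrans) : Set ℕ := {x | f x ≠ none}

/-- The image of a partial transformation. -/
def im (f : PTrans) : Set ℕ := {y | ∃ x, f x = some y}

/-- The set of fixed points: `fix(α) = {x ∈ dom α : xα = x}`. -/
def fixSet (f : PTrans) : Set ℕ := {x | f x = some x}

/-- The value of `f` at `x` (defaulting to `0` off the domain). -/
def val (f : PTrans) (x : ℕ) : ℕ := (f x).getD 0

/-- `f` is a partial transformation on `X_n = {1,…,n}`. -/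
def IsPT (n : ℕ) (f : PTrans) : Prop :=
  domSet f ⊆ Set.Icc 1 n ∧ im f ⊆ Set.Icc 1 n

/-- Order-decreasing: `xα ≤ x` for all `x ∈ dom α`. -/
def OrderDecr (f : PTrans) : Prop := ∀ x y, f x = some y → y ≤ x

/-- Order-preserving. -/
def OrderPres (f : PTrans) : Prop :=
  ∀ x y u v, f x = some u → f y = some v → x ≤ y → u ≤ v

/-- Order-reversing. -/
def OrderRev (f : PTrans) : Prop :=
  ∀ x y u v, f x = some u → f y = some v → x ≤ y → v ≤ u

/-- Monotone: order-preserving or order-reversing. -/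
def IsMonotone (f : PTrans) : Prop := OrderPres f ∨ OrderRev f

/-- Injectivity of a partial transformation. -/
def Inj (f : PTrans) : Prop := ∀ x y z, f x = some z → f y = some z → x = y

/-- The cyclic successor of `a` in the set `D`: the least element of `D`
above `a` if there is one, and otherwise the least element of `D`. -/
def cycSucc (D : Set ℕ) (a : ℕ) : ℕ :=
  if {x ∈ D | a < x}.Nonempty then sInf {x ∈ D | a < x} else sInf D

/-- The cyclic descents of `f`: those `a ∈ dom f` whose cyclic successor in
`dom f` has a strictly smaller value. Writing `dom f = {x₁ < ⋯ < x_t}` these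
are exactly the indices `1 ≤ i ≤ t` with `x_{i+1}α < x_iα` (where `x_{t+1} = x₁`). -/
def descents (f : PTrans) : Set ℕ :=
  {a ∈ domSet f | val f (cycSucc (domSet f) a) < val f a}

/-- The cyclic ascents of `f`. -/
def ascents (f : PTrans) : Set ℕ :=
  {a ∈ domSet f | val f a < val f (cycSucc (domSet f) a)}

/-- Orientation-preserving: at most one cyclic descent. -/
def OrientPres (f : PTrans) : Prop := (descents f).ncard ≤ 1

/-- Orientation-reversing: at most one cyclic ascent. -/
def OrientRev (f : PTrans) : Prop := (ascents f).ncard ≤ 1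

/-- Oriented: orientation-preserving or orientation-reversing. -/
def Oriented (f : PTrans) : Prop := OrientPres f ∨ OrientRev f

/-- `PORD n`: all oriented and order-decreasing partial transformations on `X_n`. -/
def PORD (n : ℕ) : Set PTrans := {f | IsPT n f ∧ Oriented f ∧ OrderDecr f}

/-- `PORD(n,r) = {α ∈ PORD_n : |im α| ≤ r}`. -/
def PORDr (n r : ℕ) : Set PTrans := {f ∈ PORD n | (im f).ncard ≤ r}

/-- `POPD n`: the orientation-preserving elements of `PORD n`. -/
def POPD (n : ℕ) : Set PTrans := {f ∈ PORD n | OrientPres f}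

/-- `PORD_n^* = PORD_n \ POPD_n`. -/
def PORDstar (n : ℕ) : Set PTrans := PORD n \ POPD n

/-- `PMD n`: monotone and order-decreasing partial transformations on `X_n`. -/
def PMD (n : ℕ) : Set PTrans := {f | IsPT n f ∧ IsMonotone f ∧ OrderDecr f}

/-- `PRD_n^* = PORD_n^* \ PMD_n`. -/
def PRDstar (n : ℕ) : Set PTrans := PORDstar n \ PMD n

/-- `IORD n`: the injective elements of `PORD n`. -/
def IORD (n : ℕ) : Set PTrans := {f ∈ PORD n | Inj f}

/-- `IORD(n,r) = {α ∈ IORD_n : |im α| ≤ r}`. -/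
def IORDr (n r : ℕ) : Set PTrans := {f ∈ IORD n | (im f).ncard ≤ r}

/-- `A` is a generating set of `S`: `A ⊆ S` and the smallest subsemigroup
containing `A` is `S`. -/
def IsGenSet (S A : Set PTrans) : Prop :=
  A ⊆ S ∧ (Subsemigroup.closure A : Set PTrans) = S

/-- A minimal generating set: a generating set of minimum cardinality. -/
def IsMinGenSet (S A : Set PTrans) : Prop :=
  IsGenSet S A ∧ ∀ B : Set PTrans, IsGenSet S B → A.ncard ≤ B.ncard

/-- The rank of `S`: the minimum cardinality of a generating set of `S`. -/
def rank (S : Set PTrans) : ℕ :=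
  sInf {k | ∃ A : Set PTrans, IsGenSet S A ∧ A.ncard = k}

/-- `z` is undecomposable in `S`: `z = xy` with `x, y ∈ S` forces `z = x` or `z = y`. -/
def Undecomposable (S : Set PTrans) (z : PTrans) : Prop :=
  ∀ x ∈ S, ∀ y ∈ S, z = x * y → z = x ∨ z = y

/-- `T` is a subsemigroup of (the semigroup given by the subset) `S`. -/
def IsSubsemigroupOf (T S : Set PTrans) : Prop :=
  T ⊆ S ∧ ∀ a ∈ T, ∀ b ∈ T, a * b ∈ T

/-- `T` is a maximal subsemigroup of `S`: a maximal element, under inclusion,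
of the family of proper subsemigroups of `S`. -/
def IsMaximalSubsemigroup (S T : Set PTrans) : Prop :=
  IsSubsemigroupOf T S ∧ T ≠ S ∧
    ∀ U : Set PTrans, IsSubsemigroupOf U S → U ≠ S → T ⊆ U → T = U

/-- The restriction of `f` to `Y`. -/
def restrict (f : PTrans) (Y : Set ℕ) : PTrans :=
  fun x => if x ∈ Y then f x else none

/-- The partial identity `1_Y` on `Y`. -/
def partialId (Y : Set ℕ) : PTrans := fun x => if x ∈ Y then some x else none

/-- `ξ_{p,q}`: domain `[p, q+1]`, fixes every point of `[p,q]`, maps `q+1` to `p`. -/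
def xi (p q : ℕ) : PTrans := fun x =>
  if p ≤ x ∧ x ≤ q then some x else if x = q + 1 then some p else none

/-- `γ_{p,q}` (for `1 ≤ p ≤ q−2 ≤ n−2`): with `k = min(p−1, q−p−1)` and
`l = min(q−p−1, n−q)`, it has domain `[p, p+k] ∪ [q, q+l]` and maps
`p+i ↦ p−i` and `q+j ↦ q−j`. -/
def gamma (n p q : ℕ) : PTrans := fun x =>
  if p ≤ x ∧ x ≤ p + min (p - 1) (q - p - 1) then some (2 * p - x)
  else if q ≤ x ∧ x ≤ q + min (q - p - 1) (n - q) then some (2 * q - x)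
  else none

/-- `γ_{p,q}^{r,s}`: with `u = min(r−s, q−p, n−q+1)`, it has domain
`[p, p+s−1] ∪ [q, q+u−1]` and maps `p+i ↦ p−i` and `q+j ↦ q−j`. -/
def gammaRS (n r p q s : ℕ) : PTrans := fun x =>
  if p ≤ x ∧ x + 1 ≤ p + s then some (2 * p - x)
  else if q ≤ x ∧ x + 1 ≤ q + min (r - s) (min (q - p) (n - q + 1)) then some (2 * q - x)
  else none

/-- `δ^a_Y`: domain `Y ∪ {a}`, fixes every point of `Y`, maps `a` to `a−1`. -/
def deltaMap (a : ℕ) (Y : Set ℕ) : PTrans :=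
  fun x => if x ∈ Y then some x else if x = a then some (a - 1) else none

/-- `ζ_Z`: with `a = max Z` and `b = min Z`, domain `Z ∪ {a+1}`, fixes every
point of `Z`, maps `a+1` to `b−1`. -/
def zetaMap (Z : Set ℕ) : PTrans :=
  fun x => if x ∈ Z then some x else if x = sSup Z + 1 then some (sInf Z - 1) else none

/-- `E_r`: the idempotents of `PORD_n` with image of size exactly `r`. -/
def Eset (n r : ℕ) : Set PTrans := {f ∈ PORD n | f * f = f ∧ (im f).ncard = r}

/-- `F_r = {ξ_{p,q}^r : 1 ≤ p ≤ n−2, p+1 ≤ q ≤ p+r−2 ≤ n−1}`. -/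
def Fset (n r : ℕ) : Set PTrans :=
  {f | ∃ p q : ℕ, 1 ≤ p ∧ p + 2 ≤ n ∧ p + 1 ≤ q ∧ q + 2 ≤ p + r ∧ p + r ≤ n + 1 ∧
    f = xi p q}

/-- `G_n = {γ_{p,q} : 1 ≤ p ≤ q−2 ≤ n−2} \ {γ_{1,n}}`. -/
def Gset (n : ℕ) : Set PTrans :=
  {f | ∃ p q : ℕ, 1 ≤ p ∧ p + 2 ≤ q ∧ q ≤ n ∧ f = gamma n p q} \ {gamma n 1 n}

/-- `H_n^r = {γ_{p,q}^{r,s} : 1 ≤ p ≤ q−2 ≤ n−2, 1 ≤ s ≤ min{p, q−p, r−1}, (q,s) ≠ (n,1)}`. -/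
def Hset (n r : ℕ) : Set PTrans :=
  {f | ∃ p q s : ℕ, 1 ≤ p ∧ p + 2 ≤ q ∧ q ≤ n ∧ 1 ≤ s ∧
    s ≤ min p (min (q - p) (r - 1)) ∧ ¬(q = n ∧ s = 1) ∧ f = gammaRS n r p q s}

/-- `EI_r = {1_Y : Y ⊆ X_n, |Y| = r}`. -/
def EIset (n r : ℕ) : Set PTrans :=
  {f | ∃ Y : Set ℕ, Y ⊆ Set.Icc 1 n ∧ Y.ncard = r ∧ f = partialId Y}

/-- `FI_r = {δ^a_Y : 2 ≤ a ≤ n, Y ⊆ X_n \ {a−1,a}, |Y| = r−1}`. -/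
def FIset (n r : ℕ) : Set PTrans :=
  {f | ∃ (a : ℕ) (Y : Set ℕ), 2 ≤ a ∧ a ≤ n ∧ Y ⊆ Set.Icc 1 n \ {a - 1, a} ∧
    Y.ncard = r - 1 ∧ f = deltaMap a Y}

/-- `GI_k = {ζ_Z : Z ⊆ X_n \ {1,n}, |Z| = k−1}`. -/
def GIset (n k : ℕ) : Set PTrans :=
  {f | ∃ Z : Set ℕ, Z ⊆ Set.Icc 1 n \ {1, n} ∧ Z.ncard = k - 1 ∧ f = zetaMap Z}

/-- `GI_k^c`: those `ζ_Z ∈ GI_k` with `Z` a convex subset (an interval). -/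
def GIcset (n k : ℕ) : Set PTrans :=
  {f | ∃ Z : Set ℕ, Z ⊆ Set.Icc 1 n \ {1, n} ∧ Z.ncard = k - 1 ∧ Z.OrdConnected ∧
    f = zetaMap Z}

/-- `F^r_{p,q} = {α ∈ PORD(n,r) : α restricted to [p, q+1] equals ξ_{p,q}^r}`. -/
def Frestr (n r p q : ℕ) : Set PTrans :=
  {f ∈ PORDr n r | restrict f (Set.Icc p (q + 1)) = xi p q}

/-- `G_{p,q} = {α ∈ PORD^*(n,r) : α restricted to dom(γ_{p,q}) equals γ_{p,q}}`. -/
def Grestr (n r p q : ℕ) : Set PTrans :=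
  {f ∈ PORDr n r ∩ PORDstar n | restrict f (domSet (gamma n p q)) = gamma n p q}

/-- `H^{r,s}_{p,q} = {α ∈ PORD^*(n,r) : α restricted to dom(γ^{r,s}_{p,q}) equals γ^{r,s}_{p,q}}`. -/
def Hrestr (n r p q s : ℕ) : Set PTrans :=
  {f ∈ PORDr n r ∩ PORDstar n |
    restrict f (domSet (gammaRS n r p q s)) = gammaRS n r p q s}

end

end OrientedPT

namespace OrientedPT

/-! ### Cyclically monotone quadruples -/

/-- The sequence `a, b, c, d` becomes weakly increasing after a cyclic rotation. -/
def CycMono {α : Type*} [LE α] (a b c d : α) : Prop :=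
  (a ≤ b ∧ b ≤ c ∧ c ≤ d) ∨ (b ≤ c ∧ c ≤ d ∧ d ≤ a) ∨ (c ≤ d ∧ d ≤ a ∧ a ≤ b) ∨
    (d ≤ a ∧ a ≤ b ∧ b ≤ c)

theorem CycMono.rotate {α : Type*} [LE α] {a b c d : α} (h : CycMono a b c d) :
    CycMono b c d a := by
  unfold CycMono at *
  tauto

section CyclicDescents

variable {α : Type*} [LinearOrder α] {D : Set ℕ} {F : ℕ → α}

theorem cycSucc_of_lt {a b : ℕ} (hb : b ∈ D) (hab : a < b) :
    cycSucc D a ∈ D ∧ a < cycSucc D a ∧ cycSucc D a ≤ b := by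
  have hne : {x ∈ D | a < x}.Nonempty := ⟨b, hb, hab⟩
  rw [cycSucc, if_pos hne]
  exact ⟨(Nat.sInf_mem hne).1, (Nat.sInf_mem hne).2, Nat.sInf_le ⟨hb, hab⟩⟩

theorem cycSucc_cases {a : ℕ} (ha : a ∈ D) :
    (cycSucc D a ∈ D ∧ a < cycSucc D a) ∨ (cycSucc D a ∈ D ∧ cycSucc D a ≤ a) := by
  by_cases hne : {x ∈ D | a < x}.Nonempty
  · obtain ⟨b, hb, hab⟩ := hne
    exact Or.inl ⟨(cycSucc_of_lt hb hab).1, (cycSucc_of_lt hb hab).2.1⟩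
  · right
    rw [cycSucc, if_neg hne]
    exact ⟨Nat.sInf_mem ⟨a, ha⟩, Nat.sInf_le ha⟩

theorem exists_descent_of_lt {u v : ℕ} (hu : u ∈ D) (hv : v ∈ D) (huv : u ≤ v) (h : F v < F u) :
    ∃ a ∈ D, u ≤ a ∧ a < v ∧ F (cycSucc D a) < F a := by
  induction hk : v - u using Nat.strong_induction_on generalizing u with
  | _ k ih =>
    have huv' : u < v := lt_of_le_of_ne huv (by rintro rfl; exact lt_irrefl _ h)
    obtain ⟨h1, h2, h3⟩ := cycSucc_of_lt hv huv'
    by_cases hd : F (cycSucc D u) < F u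
    · exact ⟨u, hu, le_rfl, huv', hd⟩
    · obtain ⟨a, ha, h4, h5, h6⟩ :=
        ih (v - cycSucc D u) (by omega) h1 h3 (h.trans_le (not_lt.1 hd)) rfl
      exact ⟨a, ha, by omega, h5, h6⟩

theorem exists_descent_of_gt (hD : D.Finite) {u v : ℕ} (hu : u ∈ D) (hv : v ∈ D)
    (h : F u < F v) : ∃ a ∈ D, (v ≤ a ∨ a < u) ∧ F (cycSucc D a) < F a := by
  obtain ⟨M, hM, hmax⟩ := hD.exists_maximal ⟨u, hu⟩
  have hmax' : ∀ x ∈ D, x ≤ M := fun x hx => by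
    by_contra hlt
    exact hlt (hmax hx (not_le.1 hlt).le)
  have hsucc : cycSucc D M = sInf D := by
    rw [cycSucc, if_neg]
    rintro ⟨x, hx, hMx⟩
    exact absurd (hmax' x hx) (not_le.2 hMx)
  have hm : sInf D ∈ D := Nat.sInf_mem ⟨u, hu⟩
  by_cases h1 : F M < F v
  · obtain ⟨a, ha, h4, -, h6⟩ := exists_descent_of_lt hv hM (hmax' v hv) h1
    exact ⟨a, ha, Or.inl h4, h6⟩
  by_cases h2 : F u < F (sInf D)
  · obtain ⟨a, ha, -, h5, h6⟩ := exists_descent_of_lt hm hu (Nat.sInf_le hu) h2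
    exact ⟨a, ha, Or.inr h5, h6⟩
  refine ⟨M, hM, Or.inl (hmax' v hv), ?_⟩
  rw [hsucc]
  exact (not_lt.1 h2).trans_lt (h.trans_le (not_lt.1 h1))

theorem ncard_descents_le_one_iff (hD : D.Finite) :
    {a ∈ D | F (cycSucc D a) < F a}.ncard ≤ 1 ↔
      ∀ w ∈ D, ∀ x ∈ D, ∀ y ∈ D, ∀ z ∈ D, w ≤ x → x ≤ y → y ≤ z →
        CycMono (F w) (F x) (F y) (F z) := by
  rw [Set.ncard_le_one (hD.subset (Set.sep_subset _ _))]
  constructor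
  · intro h w hw x hx y hy z hz hwx hxy hyz
    have key : ∀ a ∈ D, F (cycSucc D a) < F a → ∀ b ∈ D, F (cycSucc D b) < F b → a = b :=
      fun a ha ha' b hb hb' => h a ⟨ha, ha'⟩ b ⟨hb, hb'⟩
    have e1 : F x < F w → ∃ a ∈ D, w ≤ a ∧ a < x ∧ F (cycSucc D a) < F a :=
      exists_descent_of_lt hw hx hwx
    have e2 : F y < F x → ∃ a ∈ D, x ≤ a ∧ a < y ∧ F (cycSucc D a) < F a :=
      exists_descent_of_lt hx hy hxy
    have e3 : F z < F y → ∃ a ∈ D, y ≤ a ∧ a < z ∧ F (cycSucc D a) < F a :=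
      exists_descent_of_lt hy hz hyz
    have e4 : F w < F z → ∃ a ∈ D, (z ≤ a ∨ a < w) ∧ F (cycSucc D a) < F a :=
      exists_descent_of_gt hD hw hz
    have n12 : ¬ (F x < F w ∧ F y < F x) := by
      rintro ⟨h1, h2⟩
      obtain ⟨a, ha, _, _, ha'⟩ := e1 h1
      obtain ⟨b, hb, _, _, hb'⟩ := e2 h2
      have := key a ha ha' b hb hb'
      omega
    have n13 : ¬ (F x < F w ∧ F z < F y) := by
      rintro ⟨h1, h2⟩
      obtain ⟨a, ha, _, _, ha'⟩ := e1 h1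
      obtain ⟨b, hb, _, _, hb'⟩ := e3 h2
      have := key a ha ha' b hb hb'
      omega
    have n14 : ¬ (F x < F w ∧ F w < F z) := by
      rintro ⟨h1, h2⟩
      obtain ⟨a, ha, _, _, ha'⟩ := e1 h1
      obtain ⟨b, hb, _, hb'⟩ := e4 h2
      have := key a ha ha' b hb hb'
      omega
    have n23 : ¬ (F y < F x ∧ F z < F y) := by
      rintro ⟨h1, h2⟩
      obtain ⟨a, ha, _, _, ha'⟩ := e2 h1
      obtain ⟨b, hb, _, _, hb'⟩ := e3 h2
      have := key a ha ha' b hb hb'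
      omega
    have n24 : ¬ (F y < F x ∧ F w < F z) := by
      rintro ⟨h1, h2⟩
      obtain ⟨a, ha, _, _, ha'⟩ := e2 h1
      obtain ⟨b, hb, _, hb'⟩ := e4 h2
      have := key a ha ha' b hb hb'
      omega
    have n34 : ¬ (F z < F y ∧ F w < F z) := by
      rintro ⟨h1, h2⟩
      obtain ⟨a, ha, _, _, ha'⟩ := e3 h1
      obtain ⟨b, hb, _, hb'⟩ := e4 h2
      have := key a ha ha' b hb hb'
      omega
    by_cases h1 : F x < F w
    · exact Or.inr (Or.inl ⟨not_lt.1 fun h => n12 ⟨h1, h⟩, not_lt.1 fun h => n13 ⟨h1, h⟩,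
        not_lt.1 fun h => n14 ⟨h1, h⟩⟩)
    by_cases h2 : F y < F x
    · exact Or.inr (Or.inr (Or.inl ⟨not_lt.1 fun h => n23 ⟨h2, h⟩, not_lt.1 fun h => n24 ⟨h2, h⟩,
        not_lt.1 h1⟩))
    by_cases h3 : F z < F y
    · exact Or.inr (Or.inr (Or.inr ⟨not_lt.1 fun h => n34 ⟨h3, h⟩, not_lt.1 h1, not_lt.1 h2⟩))
    exact Or.inl ⟨not_lt.1 h1, not_lt.1 h2, not_lt.1 h3⟩
  · intro h
    have key : ∀ a ∈ D, F (cycSucc D a) < F a → ∀ b ∈ D, F (cycSucc D b) < F b → ¬ a < b := by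
      intro a ha ha' b hb hb' hab
      obtain ⟨h1, h2, h3⟩ := cycSucc_of_lt hb hab
      rcases cycSucc_cases hb with ⟨h4, h5⟩ | ⟨h4, h5⟩
      · have := h a ha _ h1 b hb _ h4 h2.le h3 h5.le
        simp only [CycMono, ← not_lt] at this
        tauto
      · have h6 : cycSucc D b ≤ a := by
          by_contra hlt
          have hne : ¬ {x ∈ D | b < x}.Nonempty := by
            rintro ⟨c, hc, hbc⟩
            exact absurd (cycSucc_of_lt hc hbc).2.1 (not_lt.2 h5)
          rw [cycSucc, if_neg hne] at hlt
          exact hlt (Nat.sInf_le ha)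
        have := h _ h4 a ha _ h1 b hb h6 h2.le h3
        simp only [CycMono, ← not_lt] at this
        tauto
    rintro a ⟨ha, ha'⟩ b ⟨hb, hb'⟩
    exact le_antisymm (not_lt.1 (key b hb hb' a ha ha')) (not_lt.1 (key a ha ha' b hb hb'))

end CyclicDescents

/-! ### Oriented order-decreasing maps in terms of quadruples -/

/-- Every increasing quadruple of the domain has a cyclically increasing image. -/
def CycPres (f : PTrans) : Prop :=
  ∀ {w x y z a b c d : ℕ}, w ≤ x → x ≤ y → y ≤ z →
    f w = some a → f x = some b → f y = some c → f z = some d → CycMono a b c d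

/-- Every increasing quadruple of the domain has a cyclically decreasing image. -/
def CycRev (f : PTrans) : Prop :=
  ∀ {w x y z a b c d : ℕ}, w ≤ x → x ≤ y → y ≤ z →
    f w = some a → f x = some b → f y = some c → f z = some d → CycMono d c b a

/-- `f` is an order-decreasing partial transformation of `{1, …, n}`. -/
def DecrOn (n : ℕ) (f : PTrans) : Prop := ∀ x y, f x = some y → 1 ≤ y ∧ y ≤ x ∧ x ≤ n

theorem val_eq_of_eq_some {f : PTrans} {x a : ℕ} (h : f x = some a) : val f x = a := by
  simp [val, h]

theorem eq_some_val {f : PTrans} {x : ℕ} (h : x ∈ domSet f) : f x = some (val f x) := by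
  obtain ⟨a, ha⟩ := Option.ne_none_iff_exists'.1 h
  rw [val_eq_of_eq_some ha, ha]

theorem mem_domSet_of_eq_some {f : PTrans} {x a : ℕ} (h : f x = some a) : x ∈ domSet f := by
  simp [domSet, h]

theorem orientPres_iff {f : PTrans} (hf : (domSet f).Finite) : OrientPres f ↔ CycPres f := by
  refine (ncard_descents_le_one_iff (F := val f) hf).trans ⟨?_, ?_⟩
  · intro h w x y z a b c d hwx hxy hyz ha hb hc hd
    have := h w (mem_domSet_of_eq_some ha) x (mem_domSet_of_eq_some hb)
      y (mem_domSet_of_eq_some hc) z (mem_domSet_of_eq_some hd) hwx hxy hyz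
    rwa [val_eq_of_eq_some ha, val_eq_of_eq_some hb, val_eq_of_eq_some hc,
      val_eq_of_eq_some hd] at this
  · intro h w hw x hx y hy z hz hwx hxy hyz
    exact h hwx hxy hyz (eq_some_val hw) (eq_some_val hx) (eq_some_val hy) (eq_some_val hz)

theorem cycMono_toDual {a b c d : ℕ} :
    CycMono (OrderDual.toDual a) (OrderDual.toDual b) (OrderDual.toDual c) (OrderDual.toDual d) ↔
      CycMono d c b a := by
  simp only [CycMono, OrderDual.toDual_le_toDual]
  tauto

theorem orientRev_iff {f : PTrans} (hf : (domSet f).Finite) : OrientRev f ↔ CycRev f := by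
  refine (ncard_descents_le_one_iff (F := fun x => OrderDual.toDual (val f x)) hf).trans ⟨?_, ?_⟩
  · intro h w x y z a b c d hwx hxy hyz ha hb hc hd
    have := cycMono_toDual.1 <| h w (mem_domSet_of_eq_some ha) x (mem_domSet_of_eq_some hb)
      y (mem_domSet_of_eq_some hc) z (mem_domSet_of_eq_some hd) hwx hxy hyz
    rwa [val_eq_of_eq_some ha, val_eq_of_eq_some hb, val_eq_of_eq_some hc,
      val_eq_of_eq_some hd] at this
  · intro h w hw x hx y hy z hz hwx hxy hyz
    exact cycMono_toDual.2 <|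
      h hwx hxy hyz (eq_some_val hw) (eq_some_val hx) (eq_some_val hy) (eq_some_val hz)

theorem DecrOn.finite_domSet {n : ℕ} {f : PTrans} (hf : DecrOn n f) : (domSet f).Finite :=
  (Set.finite_Icc 1 n).subset fun x hx => by
    have := hf x _ (eq_some_val hx)
    exact ⟨by omega, by omega⟩

theorem mem_PORD_iff {n : ℕ} {f : PTrans} :
    f ∈ PORD n ↔ DecrOn n f ∧ (CycPres f ∨ CycRev f) := by
  have key : (IsPT n f ∧ OrderDecr f) ↔ DecrOn n f := by
    constructor
    · rintro ⟨⟨h1, h2⟩, h3⟩ x y hxy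
      exact ⟨(h2 ⟨x, hxy⟩).1, h3 x y hxy, (h1 (mem_domSet_of_eq_some hxy)).2⟩
    · intro h
      refine ⟨⟨fun x hx => ?_, ?_⟩, fun x y hxy => (h x y hxy).2.1⟩
      · have := h x _ (eq_some_val hx)
        exact ⟨by omega, by omega⟩
      · rintro y ⟨x, hxy⟩
        have := h x _ hxy
        exact ⟨by omega, by omega⟩
  constructor
  · rintro ⟨h1, h2, h3⟩
    have hd := key.1 ⟨h1, h3⟩
    refine ⟨hd, ?_⟩
    rwa [Oriented, orientPres_iff hd.finite_domSet, orientRev_iff hd.finite_domSet] at h2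
  · rintro ⟨hd, h2⟩
    refine ⟨(key.2 hd).1, ?_, (key.2 hd).2⟩
    rwa [Oriented, orientPres_iff hd.finite_domSet, orientRev_iff hd.finite_domSet]

theorem mul_eq_some_iff {f g : PTrans} {x z : ℕ} :
    (f * g) x = some z ↔ ∃ y, f x = some y ∧ g y = some z := by
  exact Option.bind_eq_some_iff

theorem CycPres.cycMono_of_cycMono {g : PTrans} (hg : CycPres g) {a b c d a' b' c' d' : ℕ}
    (h : CycMono a b c d) (ha : g a = some a') (hb : g b = some b') (hc : g c = some c')
    (hd : g d = some d') : CycMono a' b' c' d' := by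
  rcases h with ⟨h1, h2, h3⟩ | ⟨h1, h2, h3⟩ | ⟨h1, h2, h3⟩ | ⟨h1, h2, h3⟩
  · exact hg h1 h2 h3 ha hb hc hd
  · exact (hg h1 h2 h3 hb hc hd ha).rotate.rotate.rotate
  · exact (hg h1 h2 h3 hc hd ha hb).rotate.rotate
  · exact (hg h1 h2 h3 hd ha hb hc).rotate

theorem CycRev.cycMono_of_cycMono {g : PTrans} (hg : CycRev g) {a b c d a' b' c' d' : ℕ}
    (h : CycMono a b c d) (ha : g a = some a') (hb : g b = some b') (hc : g c = some c')
    (hd : g d = some d') : CycMono d' c' b' a' := by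
  rcases h with ⟨h1, h2, h3⟩ | ⟨h1, h2, h3⟩ | ⟨h1, h2, h3⟩ | ⟨h1, h2, h3⟩
  · exact hg h1 h2 h3 ha hb hc hd
  · exact (hg h1 h2 h3 hb hc hd ha).rotate
  · exact (hg h1 h2 h3 hc hd ha hb).rotate.rotate
  · exact (hg h1 h2 h3 hd ha hb hc).rotate.rotate.rotate

theorem mul_mem_PORD {n : ℕ} {f g : PTrans} (hf : f ∈ PORD n) (hg : g ∈ PORD n) :
    f * g ∈ PORD n := by
  rw [mem_PORD_iff] at *
  obtain ⟨hf, hf'⟩ := hf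
  obtain ⟨hg, hg'⟩ := hg
  refine ⟨fun x z hxz => ?_, ?_⟩
  · obtain ⟨y, hy, hz⟩ := mul_eq_some_iff.1 hxz
    have := hf _ _ hy
    have := hg _ _ hz
    omega
  · have lift : ∀ P : ℕ → ℕ → ℕ → ℕ → Prop,
        (∀ {w x y z a b c d a' b' c' d'}, w ≤ x → x ≤ y → y ≤ z → f w = some a → f x = some b →
          f y = some c → f z = some d → g a = some a' → g b = some b' → g c = some c' →
          g d = some d' → P a' b' c' d') →
        ∀ {w x y z a b c d}, w ≤ x → x ≤ y → y ≤ z → (f * g) w = some a → (f * g) x = some b →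
          (f * g) y = some c → (f * g) z = some d → P a b c d := by
      intro P hP w x y z a b c d h1 h2 h3 ha hb hc hd
      obtain ⟨_, ha1, ha2⟩ := mul_eq_some_iff.1 ha
      obtain ⟨_, hb1, hb2⟩ := mul_eq_some_iff.1 hb
      obtain ⟨_, hc1, hc2⟩ := mul_eq_some_iff.1 hc
      obtain ⟨_, hd1, hd2⟩ := mul_eq_some_iff.1 hd
      exact hP h1 h2 h3 ha1 hb1 hc1 hd1 ha2 hb2 hc2 hd2
    rcases hf' with hf' | hf' <;> rcases hg' with hg' | hg'
    · exact Or.inl (lift CycMono fun h1 h2 h3 ha hb hc hd ha' hb' hc' hd' =>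
        hg'.cycMono_of_cycMono (hf' h1 h2 h3 ha hb hc hd) ha' hb' hc' hd')
    · exact Or.inr (lift (fun a b c d => CycMono d c b a)
        fun h1 h2 h3 ha hb hc hd ha' hb' hc' hd' =>
        hg'.cycMono_of_cycMono (hf' h1 h2 h3 ha hb hc hd) ha' hb' hc' hd')
    · exact Or.inr (lift (fun a b c d => CycMono d c b a)
        fun h1 h2 h3 ha hb hc hd ha' hb' hc' hd' =>
        hg'.cycMono_of_cycMono (hf' h1 h2 h3 ha hb hc hd) hd' hc' hb' ha')
    · exact Or.inl (lift CycMono fun h1 h2 h3 ha hb hc hd ha' hb' hc' hd' =>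
        hg'.cycMono_of_cycMono (hf' h1 h2 h3 ha hb hc hd) hd' hc' hb' ha')

theorem OrderPres.cycPres {f : PTrans} (hf : OrderPres f) : CycPres f :=
  fun h1 h2 h3 ha hb hc hd =>
    Or.inl ⟨hf _ _ _ _ ha hb h1, hf _ _ _ _ hb hc h2, hf _ _ _ _ hc hd h3⟩

theorem finite_PORD (n : ℕ) : (PORD n).Finite := by
  refine Set.Finite.of_finite_image
    (f := fun (f : PTrans) (i : Fin (n + 1)) => f i) ?_ ?_
  · refine (Set.Finite.pi (t := fun _ : Fin (n + 1) => insert none (some '' Set.Icc 1 n))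
      fun _ => ((Set.finite_Icc 1 n).image _).insert _).subset ?_
    rintro _ ⟨f, hf, rfl⟩ i -
    cases h : f i with
    | none => simp [h]
    | some y =>
      have := (mem_PORD_iff.1 hf).1 _ _ h
      exact Or.inr ⟨y, ⟨by omega, by omega⟩, h.symm⟩
  · intro f hf g hg hfg
    have out : ∀ h ∈ PORD n, ∀ x, n < x → h x = none := fun h hh x hx => by
      by_contra hne
      have := (mem_PORD_iff.1 hh).1 x _ (eq_some_val hne)
      omega
    funext x
    by_cases hx : n < x
    · rw [out f hf x hx, out g hg x hx]
    · exact congrFun hfg ⟨x, by omega⟩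

/-! ### The generators -/

/-- The index set of the generators, of cardinality `n ^ 2 - n + 1`. -/
def genIndex (n : ℕ) : Finset (ℕ × ℕ) := insert (0, 0) (Finset.Icc 1 n).offDiag

/-- The generator with index `i`: the identity for `i = (0, 0)`; for `i.1 < i.2` the map sending
`i.2` to `i.1`, which fixes either all other points or the points of `[i.1, i.2)`; for `i.2 < i.1`
the map `γ_{i.2,i.1}`, the exceptional indices `(p + 1, p)` and `(n, 1)` being used for the
identities with one point removed. -/
noncomputable def gen (n : ℕ) (i : ℕ × ℕ) : PTrans :=
  if i.1 = i.2 then partialId (Set.Icc 1 n)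
  else if i.1 < i.2 then
    if i.2 = i.1 + 1 then deltaMap i.2 (Set.Icc 1 n \ {i.2}) else xi i.1 (i.2 - 1)
  else if i.1 = i.2 + 1 then partialId (Set.Icc 1 n \ {i.2})
  else if i.1 = n ∧ i.2 = 1 then partialId (Set.Icc 1 n \ {n})
  else gamma n i.2 i.1

theorem card_genIndex (n : ℕ) : (genIndex n).card = n ^ 2 - n + 1 := by
  rw [genIndex, Finset.card_insert_of_notMem (by simp), Finset.offDiag_card]
  simp [sq]

theorem mem_genIndex {n a b : ℕ} (ha : 1 ≤ a) (ha' : a ≤ n) (hb : 1 ≤ b) (hb' : b ≤ n)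
    (hab : a ≠ b) : (a, b) ∈ genIndex n := by
  simp [genIndex]
  omega

/-- The subsemigroup generated by all `gen n i`. -/
noncomputable def genClosure (n : ℕ) : Subsemigroup PTrans :=
  Subsemigroup.closure (gen n '' (genIndex n : Set (ℕ × ℕ)))

theorem gen_mem {n : ℕ} {i : ℕ × ℕ} (hi : i ∈ genIndex n) : gen n i ∈ genClosure n :=
  Subsemigroup.subset_closure ⟨i, hi, rfl⟩

theorem id_mem_genClosure (n : ℕ) : partialId (Set.Icc 1 n) ∈ genClosure n := by
  have h : gen n (0, 0) = partialId (Set.Icc 1 n) := if_pos rfl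
  exact h ▸ gen_mem (by simp [genIndex])

theorem deltaMap_mem_genClosure {n b : ℕ} (hb : 2 ≤ b) (hbn : b ≤ n) :
    deltaMap b (Set.Icc 1 n \ {b}) ∈ genClosure n := by
  have h : gen n (b - 1, b) = deltaMap b (Set.Icc 1 n \ {b}) := by
    rw [gen, if_neg (by dsimp only; omega), if_pos (by dsimp only; omega),
      if_pos (by dsimp only; omega)]
  exact h ▸ gen_mem (mem_genIndex (by omega) (by omega) (by omega) hbn (by omega))

theorem xi_mem_genClosure {n p q : ℕ} (hp : 1 ≤ p) (hpq : p < q) (hq : q < n) :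
    xi p q ∈ genClosure n := by
  have h : gen n (p, q + 1) = xi p q := by
    rw [gen, if_neg (by dsimp only; omega), if_pos (by dsimp only; omega),
      if_neg (by dsimp only; omega)]
    simp
  exact h ▸ gen_mem (mem_genIndex (by omega) (by omega) (by omega) (by omega) (by omega))

theorem puncture_mem_genClosure {n b : ℕ} (hn : 3 ≤ n) (hb : 1 ≤ b) (hbn : b ≤ n) :
    partialId (Set.Icc 1 n \ {b}) ∈ genClosure n := by
  rcases hbn.lt_or_eq with hbn | rfl
  · have h : gen n (b + 1, b) = partialId (Set.Icc 1 n \ {b}) := by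
      rw [gen, if_neg (by dsimp only; omega), if_neg (by dsimp only; omega),
        if_pos (by dsimp only)]
    exact h ▸ gen_mem (mem_genIndex (by omega) (by omega) (by omega) (by omega) (by omega))
  · have h : gen b (b, 1) = partialId (Set.Icc 1 b \ {b}) := by
      rw [gen, if_neg (by dsimp only; omega), if_neg (by dsimp only; omega),
        if_neg (by dsimp only; omega), if_pos ⟨rfl, rfl⟩]
    exact h ▸ gen_mem (mem_genIndex (by omega) (by omega) (by omega) (by omega) (by omega))

theorem gamma_mem_genClosure_of_ne {n p q : ℕ} (hp : 1 ≤ p) (hpq : p + 2 ≤ q) (hq : q ≤ n)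
    (hne : ¬ (q = n ∧ p = 1)) : gamma n p q ∈ genClosure n := by
  have h : gen n (q, p) = gamma n p q := by
    rw [gen, if_neg (by dsimp only; omega), if_neg (by dsimp only; omega),
      if_neg (by dsimp only; omega), if_neg hne]
  exact h ▸ gen_mem (mem_genIndex (by omega) (by omega) (by omega) (by omega) (by omega))

theorem partialId_eq_some_iff {Y : Set ℕ} {x y : ℕ} :
    partialId Y x = some y ↔ x ∈ Y ∧ x = y := by
  unfold partialId
  split_ifs with h <;> simp [h]

theorem deltaMap_puncture_eq_some_iff {n b x y : ℕ} (hb : 1 ≤ b) (hbn : b ≤ n) :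
    deltaMap b (Set.Icc 1 n \ {b}) x = some y ↔
      1 ≤ x ∧ x ≤ n ∧ ((x = b ∧ y = b - 1) ∨ (x ≠ b ∧ y = x)) := by
  unfold deltaMap
  split_ifs with h1 h2
  · simp at h1 ⊢
    omega
  · simp
    omega
  · simp at h1 ⊢
    omega

theorem xi_eq_some_iff {p q x y : ℕ} :
    xi p q x = some y ↔ (p ≤ x ∧ x ≤ q ∧ y = x) ∨ (¬ (p ≤ x ∧ x ≤ q) ∧ x = q + 1 ∧ y = p) := by
  unfold xi
  split_ifs with h1 h2 <;> simp <;> omega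

theorem gamma_eq_some_iff {n p q x y : ℕ} (hp : 1 ≤ p) (hpq : p + 2 ≤ q) (hq : q ≤ n) :
    gamma n p q x = some y ↔
      (p ≤ x ∧ x < q ∧ x + y = 2 * p ∧ 1 ≤ y) ∨ (q ≤ x ∧ x ≤ n ∧ x + y = 2 * q ∧ p < y) := by
  unfold gamma
  split_ifs with h1 h2 <;> simp <;> omega

theorem ext_eq_some {f g : PTrans} (h : ∀ x y, f x = some y ↔ g x = some y) : f = g :=
  funext fun x => Option.ext fun y => h x y

theorem gen_mem_PORD {n : ℕ} {i : ℕ × ℕ} (hn : 3 ≤ n) (hi : i ∈ genIndex n) :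
    gen n i ∈ PORD n := by
  obtain ⟨a, b⟩ := i
  have hi' : (a = 0 ∧ b = 0) ∨ (1 ≤ a ∧ a ≤ n ∧ 1 ≤ b ∧ b ≤ n ∧ a ≠ b) := by
    simp [genIndex] at hi
    omega
  have hid : ∀ Y ⊆ Set.Icc 1 n, partialId Y ∈ PORD n := by
    intro Y hY
    refine mem_PORD_iff.2 ⟨fun x y h => ?_, Or.inl (OrderPres.cycPres ?_)⟩
    · obtain ⟨hx, rfl⟩ := partialId_eq_some_iff.1 h
      exact ⟨(hY hx).1, le_rfl, (hY hx).2⟩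
    · intro x y u v hu hv hxy
      obtain ⟨-, rfl⟩ := partialId_eq_some_iff.1 hu
      obtain ⟨-, rfl⟩ := partialId_eq_some_iff.1 hv
      exact hxy
  simp only [gen]
  split_ifs with h1 h2 h3 h4 h5
  · exact hid _ le_rfl
  · have hk : ∀ x y, deltaMap b (Set.Icc 1 n \ {b}) x = some y ↔ _ :=
      fun x y => deltaMap_puncture_eq_some_iff (by omega) (by omega)
    refine mem_PORD_iff.2 ⟨fun x y h => ?_, Or.inl (OrderPres.cycPres ?_)⟩
    · rw [hk] at h
      omega
    · intro x y u v hu hv hxy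
      rw [hk] at hu hv
      omega
  · refine mem_PORD_iff.2 ⟨fun x y h => ?_, Or.inl ?_⟩
    · rw [xi_eq_some_iff] at h
      omega
    · intro w x y z a b c d h1 h2 h3 ha hb hc hd
      rw [xi_eq_some_iff] at ha hb hc hd
      unfold CycMono
      omega
  · exact hid _ Set.sdiff_subset
  · exact hid _ Set.sdiff_subset
  · have hk : ∀ x y, gamma n b a x = some y ↔ _ :=
      fun x y => gamma_eq_some_iff (by omega) (by omega) (by omega)
    refine mem_PORD_iff.2 ⟨fun x y h => ?_, Or.inr ?_⟩
    · rw [hk] at h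
      omega
    · intro w x y z a b c d h1 h2 h3 ha hb hc hd
      rw [hk] at ha hb hc hd
      unfold CycMono
      omega

/-! ### The generators generate -/

theorem partialId_mem_genClosure {n : ℕ} (hn : 3 ≤ n) {Y : Set ℕ} (hY : Y ⊆ Set.Icc 1 n) :
    partialId Y ∈ genClosure n := by
  have key : ∀ T : Finset ℕ, partialId (Set.Icc 1 n \ (T : Set ℕ)) ∈ genClosure n := by
    intro T
    induction T using Finset.induction_on with
    | empty => simpa using id_mem_genClosure n
    | insert a T _ ih =>
      by_cases ha : 1 ≤ a ∧ a ≤ n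
      · convert (genClosure n).mul_mem ih (puncture_mem_genClosure hn ha.1 ha.2) using 1
        refine ext_eq_some fun x y => ?_
        simp only [mul_eq_some_iff, partialId_eq_some_iff]
        simp
        grind
      · convert ih using 2
        ext x
        simp
        rintro h1 h2 - rfl
        exact ha ⟨h1, h2⟩
  have hfin : (Set.Icc 1 n \ Y).Finite := (Set.finite_Icc 1 n).subset Set.sdiff_subset
  have := key hfin.toFinset
  rwa [Set.Finite.coe_toFinset, Set.sdiff_sdiff_cancel_left hY] at this

theorem OrderPres.mem_genClosure {n : ℕ} (hn : 3 ≤ n) {f : PTrans} (hd : DecrOn n f)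
    (hf : OrderPres f) : f ∈ genClosure n := by
  induction hk : ∑ x ∈ Finset.Icc 1 n, (x - val f x) using Nat.strong_induction_on
    generalizing f with
  | _ k ih =>
    by_cases hfix : ∀ x y, f x = some y → y = x
    · convert partialId_mem_genClosure hn (Y := domSet f) ?_ using 1
      · refine ext_eq_some fun x y => ?_
        rw [partialId_eq_some_iff]
        refine ⟨fun h => ⟨mem_domSet_of_eq_some h, (hfix x y h).symm⟩, ?_⟩
        rintro ⟨h, rfl⟩
        rw [eq_some_val h, hfix _ _ (eq_some_val h)]
      · intro x hx
        have := hd x _ (eq_some_val hx)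
        exact ⟨by omega, by omega⟩
    · have hne : {x | ∃ y, f x = some y ∧ y < x}.Nonempty := by
        push Not at hfix
        obtain ⟨x, y, h, hxy⟩ := hfix
        exact ⟨x, y, h, lt_of_le_of_ne (hd _ _ h).2.1 hxy⟩
      have hfin : {x | ∃ y, f x = some y ∧ y < x}.Finite :=
        hd.finite_domSet.subset fun x ⟨y, h, _⟩ => mem_domSet_of_eq_some h
      obtain ⟨i, ⟨j, hij, hji⟩, hmax⟩ := hfin.exists_maximal hne
      have hfix' : ∀ x y, i < x → f x = some y → y = x := by
        intro x y hix h
        by_contra hxy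
        have := hmax ⟨y, h, lt_of_le_of_ne (hd _ _ h).2.1 hxy⟩ hix.le
        exact absurd hix (not_lt.2 this)
      have hi := hd _ _ hij
      let g : PTrans := fun x => if x = i then some (j + 1) else f x
      have hgi : g i = some (j + 1) := if_pos rfl
      have hg : ∀ x, x ≠ i → g x = f x := fun x hx => if_neg hx
      have hgs : ∀ x y, g x = some y ↔ (x = i ∧ y = j + 1) ∨ (x ≠ i ∧ f x = some y) := by
        intro x y
        by_cases hx : x = i
        · subst hx
          simp [hgi, eq_comm]
        · simp [hg x hx, hx]
      have hgmem : g ∈ genClosure n := by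
        refine ih _ ?_ (f := g) ?_ ?_ rfl
        · rw [← hk]
          refine Finset.sum_lt_sum (fun x _ => ?_) ⟨i, Finset.mem_Icc.2 ⟨by omega, hi.2.2⟩, ?_⟩
          · by_cases hx : x = i
            · subst hx
              rw [val_eq_of_eq_some hgi, val_eq_of_eq_some hij]
              omega
            · simp [val, hg x hx]
          · rw [val_eq_of_eq_some hgi, val_eq_of_eq_some hij]
            omega
        · intro x y h
          rcases (hgs x y).1 h with ⟨rfl, rfl⟩ | ⟨_, h⟩
          · omega
          · exact hd _ _ h
        · intro x y u v hu hv hxy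
          rcases (hgs x u).1 hu with ⟨rfl, rfl⟩ | ⟨h1, hu'⟩ <;>
            rcases (hgs y v).1 hv with ⟨rfl, rfl⟩ | ⟨h2, hv'⟩
          · exact le_rfl
          · have := hfix' y v (by omega) hv'
            omega
          · have := hf _ _ _ _ hu' hij hxy
            omega
          · exact hf _ _ _ _ hu' hv' hxy
      convert (genClosure n).mul_mem hgmem
        (deltaMap_mem_genClosure (b := j + 1) (by omega) (by omega)) using 1
      refine ext_eq_some fun x y => ?_
      simp only [mul_eq_some_iff, hgs, deltaMap_puncture_eq_some_iff (n := n) (b := j + 1)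
        (by omega) (by omega)]
      constructor
      · intro h
        have h1 := hd _ _ h
        by_cases hx : x = i
        · subst hx
          have : y = j := Option.some.inj (h.symm.trans hij)
          exact ⟨j + 1, Or.inl ⟨rfl, rfl⟩, by omega⟩
        · refine ⟨y, Or.inr ⟨hx, h⟩, by omega, by omega, Or.inr ⟨?_, rfl⟩⟩
          rcases lt_or_gt_of_ne hx with hlt | hgt
          · have := hf _ _ _ _ h hij hlt.le
            omega
          · have := hfix' x y hgt h
            omega
      · rintro ⟨u, ⟨rfl, rfl⟩ | ⟨hx, h⟩, h1, h2, h3⟩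
        · obtain rfl : y = j := by omega
          exact hij
        · have : u ≠ j + 1 := by
            rcases lt_or_gt_of_ne hx with hlt | hgt
            · have := hf _ _ _ _ h hij hlt.le
              omega
            · have := hfix' x u hgt h
              omega
          obtain rfl : y = u := by omega
          exact h

theorem gamma_mem_genClosure {n p q : ℕ} (hn : 3 ≤ n) (hp : 1 ≤ p) (hpq : p + 2 ≤ q)
    (hq : q ≤ n) : gamma n p q ∈ genClosure n := by
  by_cases hne : q = n ∧ p = 1
  · refine OrderPres.mem_genClosure hn (fun x y h => ?_) fun x y u v hu hv hxy => ?_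
    · rw [gamma_eq_some_iff hp hpq hq] at h
      omega
    · rw [gamma_eq_some_iff hp hpq hq] at hu hv
      omega
  · exact gamma_mem_genClosure_of_ne hp hpq hq hne

/-- If `f` factors through `g` by a decreasing order-preserving map, then `f` is generated as soon
as `g` is. -/
theorem mem_genClosure_of_factor {n : ℕ} (hn : 3 ≤ n) {f g : PTrans} (hd : DecrOn n f)
    (hg : g ∈ genClosure n) (hdg : DecrOn n g)
    (hdom : ∀ x, (∃ u, f x = some u) ↔ ∃ v, g x = some v)
    (hle : ∀ x u v, f x = some u → g x = some v → u ≤ v)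
    (hmono : ∀ x y a b u v, f x = some a → f y = some b → g x = some u → g y = some v →
      u ≤ v → a ≤ b) : f ∈ genClosure n := by
  classical
  let h : PTrans := fun y => if hy : ∃ x, g x = some y then f hy.choose else none
  have hh : ∀ y z, h y = some z ↔ ∃ x, g x = some y ∧ f x = some z := by
    intro y z
    by_cases hy : ∃ x, g x = some y
    · have e : h y = f hy.choose := dif_pos hy
      rw [e]
      refine ⟨fun h' => ⟨_, hy.choose_spec, h'⟩, ?_⟩
      rintro ⟨x, hx, hz⟩
      obtain ⟨c, hc⟩ := (hdom _).2 ⟨y, hy.choose_spec⟩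
      have h1 := hmono _ _ _ _ _ _ hc hz hy.choose_spec hx le_rfl
      have h2 := hmono _ _ _ _ _ _ hz hc hx hy.choose_spec le_rfl
      rw [hc, le_antisymm h1 h2]
    · have e : h y = none := dif_neg hy
      rw [e]
      simp only [reduceCtorEq, false_iff]
      rintro ⟨x, hx, -⟩
      exact hy ⟨x, hx⟩
  have hhmem : h ∈ genClosure n := by
    refine OrderPres.mem_genClosure hn (fun y z hyz => ?_) fun y y' z z' hz hz' hyy' => ?_
    · obtain ⟨x, hx, hxz⟩ := (hh y z).1 hyz
      have h1 := hd _ _ hxz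
      have h2 := hdg _ _ hx
      have h3 := hle _ _ _ hxz hx
      omega
    · obtain ⟨x, hx, hxz⟩ := (hh y z).1 hz
      obtain ⟨x', hx', hxz'⟩ := (hh y' z').1 hz'
      exact hmono _ _ _ _ _ _ hxz hxz' hx hx' hyy'
  convert (genClosure n).mul_mem hg hhmem using 1
  refine ext_eq_some fun x z => ?_
  rw [mul_eq_some_iff]
  constructor
  · intro hz
    obtain ⟨y, hy⟩ := (hdom x).1 ⟨z, hz⟩
    exact ⟨y, hy, (hh y z).2 ⟨x, hy, hz⟩⟩
  · rintro ⟨y, hy, hyz⟩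
    obtain ⟨x', hx', hz⟩ := (hh y z).1 hyz
    obtain ⟨c, hc⟩ := (hdom x).2 ⟨y, hy⟩
    have h1 := hmono _ _ _ _ _ _ hc hz hy hx' le_rfl
    have h2 := hmono _ _ _ _ _ _ hz hc hx' hy le_rfl
    rw [hc, le_antisymm h1 h2]

open Classical in
/-- The number of values larger than the one at `x` which `f` takes on `[m, x)`. -/
noncomputable def numAbove (f : PTrans) (m x : ℕ) : ℕ :=
  (((Finset.Ico m x).filter fun y => y ∈ domSet f ∧ val f x < val f y).image (val f)).card

theorem numAbove_le_sub (f : PTrans) (m x : ℕ) : numAbove f m x ≤ x - m := by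
  classical
  refine Finset.card_image_le.trans ((Finset.card_filter_le _ _).trans ?_)
  rw [Nat.card_Ico]

theorem numAbove_le_of_bound {f : PTrans} {m x k : ℕ}
    (h : ∀ y ∈ domSet f, m ≤ y → y < x → val f y ≤ k) : numAbove f m x ≤ k - val f x := by
  rw [← Nat.card_Ioc]
  refine Finset.card_le_card fun v hv => ?_
  simp only [Finset.mem_image, Finset.mem_filter, Finset.mem_Ico] at hv
  obtain ⟨y, ⟨⟨h1, h2⟩, h3, h4⟩, rfl⟩ := hv
  exact Finset.mem_Ioc.2 ⟨h4, h y h3 h1 h2⟩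

theorem numAbove_mono {f : PTrans} {m x y : ℕ} (hxy : x ≤ y) (h : val f y ≤ val f x) :
    numAbove f m x ≤ numAbove f m y := by
  refine Finset.card_le_card (Finset.image_subset_image fun z hz => ?_)
  simp only [Finset.mem_filter, Finset.mem_Ico] at hz ⊢
  exact ⟨⟨hz.1.1, by omega⟩, hz.2.1, by omega⟩

theorem numAbove_lt {f : PTrans} {m x y : ℕ} (hx : x ∈ domSet f) (hmx : m ≤ x) (hxy : x < y)
    (h : val f y < val f x) : numAbove f m x < numAbove f m y := by
  classical
  refine Finset.card_lt_card (Finset.ssubset_iff_of_subset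
    (Finset.image_subset_image fun z hz => ?_) |>.2 ⟨val f x, ?_, ?_⟩)
  · simp only [Finset.mem_filter, Finset.mem_Ico] at hz ⊢
    exact ⟨⟨hz.1.1, by omega⟩, hz.2.1, by omega⟩
  · exact Finset.mem_image_of_mem _
      (Finset.mem_filter.2 ⟨Finset.mem_Ico.2 ⟨hmx, hxy⟩, hx, h⟩)
  · simp only [Finset.mem_image, Finset.mem_filter]
    rintro ⟨y, ⟨_, _, h1⟩, h2⟩
    omega

theorem mem_genClosure_of_antitone_blocks {n p q : ℕ} (hn : 3 ≤ n) {f : PTrans} (hd : DecrOn n f)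
    (hp : 1 ≤ p) (hpq : p + 2 ≤ q) (hq : q ≤ n)
    (hA : ∀ x a, f x = some a → x < q → p ≤ x ∧ a ≤ p)
    (hB : ∀ x a, f x = some a → q ≤ x → p < a ∧ a ≤ q)
    (hanti : ∀ x y a b, f x = some a → f y = some b → x ≤ y → (y < q ∨ q ≤ x) → b ≤ a) :
    f ∈ genClosure n := by
  classical
  let c : ℕ → ℕ := fun x => if x < q then numAbove f p x else numAbove f q x
  have hcA : ∀ x, x < q → c x = numAbove f p x := fun x hx => if_pos hx
  have hcB : ∀ x, q ≤ x → c x = numAbove f q x := fun x hx => if_neg (not_lt.2 hx)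
  have boundA : ∀ x a, f x = some a → x < q → p + c x ≤ x ∧ a + c x ≤ p := by
    intro x a hx hxq
    have h1 := numAbove_le_sub f p x
    have h2 := hA x a hx hxq
    have h3 := numAbove_le_of_bound (f := f) (m := p) (x := x) (k := p) fun y hy _ hyx =>
      (hA y _ (eq_some_val hy) (by omega)).2
    rw [val_eq_of_eq_some hx] at h3
    rw [hcA x hxq]
    omega
  have boundB : ∀ x a, f x = some a → q ≤ x → q + c x ≤ x ∧ a + c x ≤ q := by
    intro x a hx hxq
    have h1 := numAbove_le_sub f q x
    have h2 := hB x a hx hxq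
    have h3 := numAbove_le_of_bound (f := f) (m := q) (x := x) (k := q) fun y hy hqy hyx =>
      (hB y _ (eq_some_val hy) (by omega)).2
    rw [val_eq_of_eq_some hx] at h3
    rw [hcB x hxq]
    omega
  have mono : ∀ x y a b, f x = some a → f y = some b → x ≤ y → (y < q ∨ q ≤ x) → c x ≤ c y := by
    intro x y a b ha hb hxy h
    have h1 := hanti x y a b ha hb hxy h
    rw [← val_eq_of_eq_some ha, ← val_eq_of_eq_some hb] at h1
    rcases h with h | h
    · rw [hcA x (by omega), hcA y h]
      exact numAbove_mono hxy h1
    · rw [hcB x h, hcB y (by omega)]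
      exact numAbove_mono hxy h1
  have strict : ∀ x y a b, f x = some a → f y = some b → x < y → (y < q ∨ q ≤ x) → b < a →
      c x < c y := by
    intro x y a b ha hb hxy h h1
    rw [← val_eq_of_eq_some ha, ← val_eq_of_eq_some hb] at h1
    rcases h with h | h
    · rw [hcA x (by omega), hcA y h]
      exact numAbove_lt (mem_domSet_of_eq_some ha) (hA x a ha (by omega)).1 hxy h1
    · rw [hcB x h, hcB y (by omega)]
      exact numAbove_lt (mem_domSet_of_eq_some ha) h hxy h1
  let β : PTrans := fun x => (f x).map fun _ => if x < q then p + c x else q + c x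
  have hβ : ∀ x y, β x = some y ↔
      (∃ a, f x = some a) ∧ ((x < q ∧ y = p + c x) ∨ (q ≤ x ∧ y = q + c x)) := by
    intro x y
    have e : β x = (f x).map fun _ => if x < q then p + c x else q + c x := rfl
    rw [e, Option.map_eq_some_iff]
    by_cases hx : x < q
    · simp [hx, not_le.2 hx, eq_comm]
    · simp [hx, not_lt.1 hx, eq_comm]
  have hβmem : β ∈ genClosure n := by
    refine OrderPres.mem_genClosure hn (fun x y h => ?_) fun x y u v hu hv hxy => ?_
    · obtain ⟨⟨a, ha⟩, h⟩ := (hβ x y).1 h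
      have h1 := hd _ _ ha
      have h2 := boundA x a ha
      have h3 := boundB x a ha
      omega
    · obtain ⟨⟨a, ha⟩, h⟩ := (hβ x u).1 hu
      obtain ⟨⟨b, hb⟩, h'⟩ := (hβ y v).1 hv
      have h1 := mono x y a b ha hb hxy
      have h2 := boundA x a ha
      have h3 := boundA y b hb
      omega
  have hg : ∀ x v, (β * gamma n p q) x = some v ↔
      (∃ a, f x = some a) ∧ ((x < q ∧ v + c x = p) ∨ (q ≤ x ∧ v + c x = q)) := by
    intro x v
    simp only [mul_eq_some_iff, hβ, gamma_eq_some_iff hp hpq hq]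
    constructor
    · rintro ⟨y, ⟨⟨a, ha⟩, h⟩, h'⟩
      have h2 := boundA x a ha
      have h3 := boundB x a ha
      exact ⟨⟨a, ha⟩, by omega⟩
    · rintro ⟨⟨a, ha⟩, h⟩
      have h1 := hd _ _ ha
      have h2 := boundA x a ha
      have h3 := boundB x a ha
      have h4 := hB x a ha
      rcases h with h | h
      · exact ⟨p + c x, ⟨⟨a, ha⟩, by omega⟩, by omega⟩
      · exact ⟨q + c x, ⟨⟨a, ha⟩, by omega⟩, by omega⟩
  refine mem_genClosure_of_factor hn hd
    ((genClosure n).mul_mem hβmem (gamma_mem_genClosure hn hp hpq hq)) ?_ ?_ ?_ ?_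
  · intro x v h
    obtain ⟨⟨a, ha⟩, h⟩ := (hg x v).1 h
    have h1 := hd _ _ ha
    have h2 := boundA x a ha
    have h3 := boundB x a ha
    omega
  · intro x
    refine ⟨?_, fun ⟨v, h⟩ => ((hg x v).1 h).1⟩
    rintro ⟨a, ha⟩
    have h2 := boundA x a ha
    have h3 := boundB x a ha
    by_cases hx : x < q
    · exact ⟨p - c x, (hg _ _).2 ⟨⟨a, ha⟩, by omega⟩⟩
    · exact ⟨q - c x, (hg _ _).2 ⟨⟨a, ha⟩, by omega⟩⟩
  · intro x a v ha h
    obtain ⟨-, h⟩ := (hg x v).1 h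
    have h2 := boundA x a ha
    have h3 := boundB x a ha
    omega
  · intro x y a b u v ha hb hu hv huv
    obtain ⟨-, hu⟩ := (hg x u).1 hu
    obtain ⟨-, hv⟩ := (hg y v).1 hv
    have hxA := hA x a ha
    have hxB := hB x a ha
    have hyA := hA y b hb
    have hyB := hB y b hb
    have hb1 := boundA y b hb
    have hb2 := boundB x a ha
    have hb3 := boundA x a ha
    have hb4 := boundB y b hb
    by_contra hlt
    have h1 := strict x y a b ha hb
    have h2 := hanti y x b a hb ha
    have h3 : x ≠ y := by
      rintro rfl
      have := Option.some.inj (ha.symm.trans hb)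
      omega
    omega

/-- If the value at the largest point of the domain does not exceed the value at the smallest one,
then moving the largest point of the domain to its image leaves an oriented map. -/
theorem exists_xi_mul_eq {n m M a b : ℕ} {f : PTrans} (hf : f ∈ PORD n)
    (hm : f m = some a) (hM : f M = some b) (hmin : ∀ x u, f x = some u → m ≤ x ∧ x ≤ M)
    (hba : b ≤ a) (hbM : b + 2 ≤ M) :
    ∃ g ∈ PORD n, (∀ x u, g x = some u → x < M) ∧ partialId (domSet f) * (xi b (M - 1) * g) = f := by
  classical
  rw [mem_PORD_iff] at hf
  obtain ⟨hd, ho⟩ := hf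
  have hma := hd _ _ hm
  have hMb := hd _ _ hM
  let g : PTrans := fun x => if x = b then some b else if x < M then f x else none
  have hg : ∀ x u, g x = some u ↔ (x = b ∧ u = b) ∨ (x ≠ b ∧ x < M ∧ f x = some u) := by
    intro x u
    have e : g x = if x = b then some b else if x < M then f x else none := rfl
    rw [e]
    split_ifs with h1 h2
    · simp [h1, eq_comm]
    · simp [h1, h2]
    · simp [h1, h2]
  have lift : ∀ P : ℕ → ℕ → ℕ → ℕ → Prop, (∀ {a b c d}, P a b c d → P b c d a) →
      (∀ {w x y z a b c d}, w ≤ x → x ≤ y → y ≤ z → f w = some a → f x = some b →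
          f y = some c → f z = some d → P a b c d) →
      ∀ {w x y z a b c d}, w ≤ x → x ≤ y → y ≤ z → g w = some a → g x = some b →
          g y = some c → g z = some d → P a b c d := by
    intro P hrot hP w x y z a' b' c' d' h1 h2 h3 ha hb hc hd
    rcases (hg w a').1 ha with ⟨rfl, rfl⟩ | ⟨hw1, hw2, hw3⟩
    · rcases (hg x b').1 hb with ⟨rfl, rfl⟩ | ⟨hx1, hx2, hx3⟩
      · rcases (hg y c').1 hc with ⟨rfl, rfl⟩ | ⟨hy1, hy2, hy3⟩
        · rcases (hg z d').1 hd with ⟨rfl, rfl⟩ | ⟨hz1, hz2, hz3⟩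
          · exact hP le_rfl le_rfl le_rfl hM hM hM hM
          · exact hrot (hP hz2.le le_rfl le_rfl hz3 hM hM hM)
        · rcases (hg z d').1 hd with ⟨rfl, rfl⟩ | ⟨hz1, hz2, hz3⟩
          · have := hmin _ _ hy3
            omega
          · exact hrot (hrot (hP h3 hz2.le le_rfl hy3 hz3 hM hM))
      · rcases (hg y c').1 hc with ⟨rfl, rfl⟩ | ⟨hy1, hy2, hy3⟩
        · have := hmin _ _ hx3
          omega
        rcases (hg z d').1 hd with ⟨rfl, rfl⟩ | ⟨hz1, hz2, hz3⟩
        · have := hmin _ _ hx3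
          omega
        exact hrot (hrot (hrot (hP h2 h3 hz2.le hx3 hy3 hz3 hM)))
    · have := hmin _ _ hw3
      rcases (hg x b').1 hb with ⟨rfl, rfl⟩ | ⟨hx1, hx2, hx3⟩
      · omega
      rcases (hg y c').1 hc with ⟨rfl, rfl⟩ | ⟨hy1, hy2, hy3⟩
      · omega
      rcases (hg z d').1 hd with ⟨rfl, rfl⟩ | ⟨hz1, hz2, hz3⟩
      · omega
      exact hP h1 h2 h3 hw3 hx3 hy3 hz3
  refine ⟨g, mem_PORD_iff.2 ⟨fun x u h => ?_, ?_⟩, fun x u h => ?_, ?_⟩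
  · rcases (hg x u).1 h with ⟨rfl, rfl⟩ | ⟨_, _, h⟩
    · omega
    · exact hd _ _ h
  · exact ho.imp (fun ho => lift CycMono CycMono.rotate ho)
      (fun ho => lift (fun a b c d => CycMono d c b a)
        (fun h => h.rotate.rotate.rotate) ho)
  · rcases (hg x u).1 h with ⟨rfl, rfl⟩ | ⟨_, h, _⟩ <;> omega
  · refine ext_eq_some fun x u => ?_
    simp only [mul_eq_some_iff, xi_eq_some_iff, partialId_eq_some_iff, hg]
    constructor
    · rintro ⟨_, ⟨hx, rfl⟩, y, h1, h2⟩
      rcases h2 with ⟨hyb, hub⟩ | ⟨h2, h3, h4⟩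
      · by_cases hxM : x = M
        · rw [hxM, hM, hub]
        · have h3 := hmin _ _ (eq_some_val hx)
          have h4 : x = m := by omega
          rw [h4, hm, show u = a by omega]
      · obtain rfl : x = y := by omega
        exact h4
    · intro h
      have := hmin x u h
      refine ⟨x, ⟨mem_domSet_of_eq_some h, rfl⟩, ?_⟩
      by_cases hx : x = M
      · subst hx
        obtain rfl : u = b := Option.some.inj (h.symm.trans hM)
        exact ⟨u, by omega, by omega⟩
      · refine ⟨x, by omega, ?_⟩
        by_cases hxb : x = b
        · obtain rfl : x = m := by omega
          have : u = a := Option.some.inj (h.symm.trans hm)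
          omega
        · exact Or.inr ⟨hxb, by omega, h⟩

theorem mem_genClosure_of_lt {n m M a b : ℕ} (hn : 3 ≤ n) {f : PTrans} (hf : f ∈ PORD n)
    (hm : f m = some a) (hM : f M = some b) (hmin : ∀ x u, f x = some u → m ≤ x ∧ x ≤ M)
    (hab : a < b) : f ∈ genClosure n := by
  rw [mem_PORD_iff] at hf
  obtain ⟨hd, ho | ho⟩ := hf
  · refine OrderPres.mem_genClosure hn hd fun x y u v hu hv hxy => ?_
    have := ho (hmin _ _ hu).1 hxy (hmin _ _ hv).2 hm hu hv hM
    unfold CycMono at this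
    omega
  by_cases hpres : OrderPres f
  · exact hpres.mem_genClosure hn hd
  have hne : {x | ∃ u, f x = some u ∧ a < u}.Nonempty := ⟨M, b, hM, hab⟩
  obtain ⟨c, hc, hac⟩ := Nat.sInf_mem hne
  set q := sInf {x | ∃ u, f x = some u ∧ a < u} with hq
  have quad : ∀ x y u v, f x = some u → f y = some v → x ≤ y → CycMono b v u a :=
    fun x y u v hu hv hxy => ho (hmin _ _ hu).1 hxy (hmin _ _ hv).2 hm hu hv hM
  have hA : ∀ x u, f x = some u → x < q → u ≤ a := by
    intro x u hu hxq
    by_contra hlt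
    exact absurd (Nat.sInf_le (s := {x | ∃ u, f x = some u ∧ a < u}) ⟨u, hu, not_le.1 hlt⟩)
      (not_le.2 hxq)
  have hB : ∀ x u, f x = some u → q ≤ x → a < u ∧ u ≤ c := by
    intro x u hu hqx
    have := quad q x c u hc hu hqx
    unfold CycMono at this
    omega
  have hanti : ∀ x y u v, f x = some u → f y = some v → x ≤ y → (y < q ∨ q ≤ x) → v ≤ u := by
    intro x y u v hu hv hxy h
    have h1 := quad x y u v hu hv hxy
    have h2 := hA y v hv
    have h3 := hB x u hu
    unfold CycMono at h1
    omega
  have hma := hd _ _ hm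
  have hqc := hd _ _ hc
  have hmq := (hmin _ _ hc).1
  by_cases hpq : a + 2 ≤ q
  · refine mem_genClosure_of_antitone_blocks hn hd hma.1 hpq hqc.2.2 (fun x u hu hx => ?_)
      (fun x u hu hx => ?_) hanti
    · have := (hmin _ _ hu).1
      exact ⟨by omega, hA x u hu hx⟩
    · have := hB x u hu hx
      omega
  · refine absurd (fun x y u v hu hv hxy => ?_) hpres
    have h1 := hA x u hu
    have h2 := hA y v hv
    have h3 := hB x u hu
    have h4 := hB y v hv
    have h5 := hmin _ _ hu
    have h6 := hmin _ _ hv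
    by_cases hx : x < q
    · by_cases hy : y < q
      · obtain rfl : x = y := by omega
        exact (Option.some.inj (hu.symm.trans hv)).le
      · omega
    · omega

theorem mem_genClosure_of_mem_PORD {n : ℕ} (hn : 3 ≤ n) {f : PTrans} (hf : f ∈ PORD n) :
    f ∈ genClosure n := by
  have key : ∀ k : ℕ, ∀ f ∈ PORD n, (∀ x u, f x = some u → x < k) → f ∈ genClosure n := by
    intro k
    induction k using Nat.strong_induction_on with
    | _ k ih =>
    intro f hf hk
    have hd := (mem_PORD_iff.1 hf).1
    rcases (domSet f).eq_empty_or_nonempty with he | hne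
    · refine OrderPres.mem_genClosure hn hd fun x y u v hu _ _ => ?_
      exact absurd (mem_domSet_of_eq_some hu) (he ▸ Set.notMem_empty x)
    obtain ⟨M, hMd, hmax⟩ := hd.finite_domSet.exists_maximal hne
    have hM := eq_some_val hMd
    have hm := eq_some_val (Nat.sInf_mem hne)
    have hmin : ∀ x u, f x = some u → sInf (domSet f) ≤ x ∧ x ≤ M := by
      intro x u hu
      refine ⟨Nat.sInf_le (mem_domSet_of_eq_some hu), ?_⟩
      by_contra hlt
      exact hlt (hmax (mem_domSet_of_eq_some hu) (not_le.1 hlt).le)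
    by_cases hab : val f (sInf (domSet f)) < val f M
    · exact mem_genClosure_of_lt hn hf hm hM hmin hab
    by_cases hbM : val f M + 2 ≤ M
    · obtain ⟨g, hg, hgM, hfg⟩ := exists_xi_mul_eq hf hm hM hmin (not_lt.1 hab) hbM
      have h1 := hd _ _ hM
      rw [← hfg]
      refine (genClosure n).mul_mem (partialId_mem_genClosure hn fun x hx => ?_)
        ((genClosure n).mul_mem (xi_mem_genClosure h1.1 (by omega) (by omega))
          (ih M (hk _ _ hM) g hg hgM))
      have := hd x _ (eq_some_val hx)
      exact ⟨by omega, by omega⟩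
    · refine OrderPres.mem_genClosure hn hd fun x y u v hu hv hxy => ?_
      have h1 := hd _ _ hm
      have h2 := hd _ _ hM
      have h3 := hmin _ _ hu
      have h4 := hmin _ _ hv
      rcases hxy.lt_or_eq with hlt | rfl
      · obtain rfl : y = M := by omega
        obtain hx : x = sInf (domSet f) := by omega
        have h5 := val_eq_of_eq_some hu
        have h6 := val_eq_of_eq_some hv
        rw [hx] at h5
        omega
      · exact (Option.some.inj (hu.symm.trans hv)).le
  exact key (n + 1) f hf fun x u hu => Nat.lt_succ_of_le ((mem_PORD_iff.1 hf).1 x u hu).2.2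

theorem isGenSet_gen {n : ℕ} (hn : 3 ≤ n) :
    IsGenSet (PORD n) (gen n '' (genIndex n : Set (ℕ × ℕ))) := by
  have hsub : gen n '' (genIndex n : Set (ℕ × ℕ)) ⊆ PORD n := by
    rintro _ ⟨i, hi, rfl⟩
    exact gen_mem_PORD hn hi
  refine ⟨hsub, Set.Subset.antisymm (fun f hf => ?_) fun f hf => mem_genClosure_of_mem_PORD hn hf⟩
  exact Subsemigroup.closure_induction (p := fun f _ => f ∈ PORD n) (fun f hf => hsub hf)
    (fun f g _ _ hf hg => mul_mem_PORD hf hg) hf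

/-! ### Lower bound: disjoint sets with multiplicatively closed complement -/

/-- The maps fixing every point of `{1, …, n}` other than `b`. -/
def FixesOff (n b : ℕ) (f : PTrans) : Prop := ∀ x, 1 ≤ x → x ≤ n → x ≠ b → f x = some x

/-- The maps extending `ξ_{a,b-1}`. -/
def ExtendsXi (a b : ℕ) (f : PTrans) : Prop :=
  f b = some a ∧ ∀ x, a ≤ x → x < b → f x = some x

/-- The maps extending `γ_{p,q}`. -/
def ExtendsGamma (n p q : ℕ) (f : PTrans) : Prop :=
  (∀ i, p + i < q → i < p → f (p + i) = some (p - i)) ∧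
    ∀ j, p + j < q → q + j ≤ n → f (q + j) = some (q - j)

/-- A set of maps which every generating set of `PORD n` has to meet. -/
def block (n : ℕ) (i : ℕ × ℕ) : Set PTrans :=
  if i.1 = i.2 then {f | FixesOff n 0 f}
  else if i.1 < i.2 then
    if i.2 = i.1 + 1 then {f | FixesOff n i.2 f ∧ f i.2 = some i.1}
    else {f | ExtendsXi i.1 i.2 f}
  else if i.1 = i.2 + 1 then {f | FixesOff n i.2 f ∧ f i.2 = none}
  else if i.1 = n ∧ i.2 = 1 then {f | FixesOff n n f ∧ f n = none}
  else {f | ExtendsGamma n i.2 i.1 f}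

/-- The five kinds of indices, with the corresponding generators and blocks. -/
theorem genIndex_cases {n : ℕ} {i : ℕ × ℕ} (hi : i ∈ genIndex n) :
    (i = (0, 0) ∧ gen n i = partialId (Set.Icc 1 n) ∧ block n i = {f | FixesOff n 0 f}) ∨
    (∃ b, 2 ≤ b ∧ b ≤ n ∧ i = (b - 1, b) ∧ gen n i = deltaMap b (Set.Icc 1 n \ {b}) ∧
      block n i = {f | FixesOff n b f ∧ f b = some (b - 1)}) ∨
    (∃ a b, 1 ≤ a ∧ a + 2 ≤ b ∧ b ≤ n ∧ i = (a, b) ∧ gen n i = xi a (b - 1) ∧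
      block n i = {f | ExtendsXi a b f}) ∨
    (∃ b, 1 ≤ b ∧ b ≤ n ∧ ((b < n ∧ i = (b + 1, b)) ∨ (b = n ∧ i = (n, 1))) ∧
      gen n i = partialId (Set.Icc 1 n \ {b}) ∧
      block n i = {f | FixesOff n b f ∧ f b = none}) ∨
    (∃ p q, 1 ≤ p ∧ p + 2 ≤ q ∧ q ≤ n ∧ ¬ (q = n ∧ p = 1) ∧ i = (q, p) ∧ gen n i = gamma n p q ∧
      block n i = {f | ExtendsGamma n p q f}) := by
  obtain ⟨a, b⟩ := i
  have hi' : (a = 0 ∧ b = 0) ∨ (1 ≤ a ∧ a ≤ n ∧ 1 ≤ b ∧ b ≤ n ∧ a ≠ b) := by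
    simp [genIndex] at hi
    omega
  simp only [gen, block]
  split_ifs with h1 h2 h3 h4 h5
  · exact Or.inl ⟨by simp; omega, rfl, rfl⟩
  · refine Or.inr (Or.inl ⟨b, by omega, by omega, by simp; omega, rfl, ?_⟩)
    rw [show a = b - 1 by omega]
  · exact Or.inr (Or.inr (Or.inl ⟨a, b, by omega, by omega, by omega, rfl, rfl, rfl⟩))
  · exact Or.inr (Or.inr (Or.inr (Or.inl ⟨b, by omega, by omega,
      Or.inl ⟨by omega, by simp; omega⟩, rfl, rfl⟩)))
  · exact Or.inr (Or.inr (Or.inr (Or.inl ⟨n, by omega, by omega,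
      Or.inr ⟨rfl, by simp; omega⟩, rfl, rfl⟩)))
  · exact Or.inr (Or.inr (Or.inr (Or.inr ⟨b, a, by omega, by omega, by omega, h5, rfl, rfl, rfl⟩)))

theorem gen_mem_block {n : ℕ} {i : ℕ × ℕ} (hi : i ∈ genIndex n) : gen n i ∈ block n i := by
  rcases genIndex_cases hi with ⟨-, hg, hb⟩ | ⟨b, h1, h2, -, hg, hb⟩ | ⟨a, b, h1, h2, h3, -, hg, hb⟩
    | ⟨b, h1, h2, -, hg, hb⟩ | ⟨p, q, h1, h2, h3, -, -, hg, hb⟩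
  · rw [hg, hb]
    exact fun x h1 h2 _ => partialId_eq_some_iff.2 ⟨⟨h1, h2⟩, rfl⟩
  · rw [hg, hb]
    exact ⟨fun x h3 h4 h5 => (deltaMap_puncture_eq_some_iff (by omega) h2).2 (by omega),
      (deltaMap_puncture_eq_some_iff (by omega) h2).2 (by omega)⟩
  · rw [hg, hb]
    exact ⟨xi_eq_some_iff.2 (by omega), fun x h4 h5 => xi_eq_some_iff.2 (by omega)⟩
  · rw [hg, hb]
    exact ⟨fun x h3 h4 h5 => partialId_eq_some_iff.2 ⟨⟨⟨h3, h4⟩, h5⟩, rfl⟩, by simp [partialId]⟩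
  · rw [hg, hb]
    exact ⟨fun i h4 h5 => (gamma_eq_some_iff h1 h2 h3).2 (by omega),
      fun j h4 h5 => (gamma_eq_some_iff h1 h2 h3).2 (by omega)⟩

theorem fixes_of_mul_fixes {n x : ℕ} {f g : PTrans} (hf : DecrOn n f) (hg : DecrOn n g)
    (h : (f * g) x = some x) : f x = some x ∧ g x = some x := by
  obtain ⟨y, hy, hx⟩ := mul_eq_some_iff.1 h
  have h1 := (hf _ _ hy).2.1
  have h2 := (hg _ _ hx).2.1
  obtain rfl : x = y := le_antisymm h2 h1
  exact ⟨hy, hx⟩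

theorem FixesOff.of_mul {n b : ℕ} {f g : PTrans} (hf : DecrOn n f) (hg : DecrOn n g)
    (h : FixesOff n b (f * g)) : FixesOff n b f ∧ FixesOff n b g :=
  ⟨fun x h1 h2 h3 => (fixes_of_mul_fixes hf hg (h x h1 h2 h3)).1,
    fun x h1 h2 h3 => (fixes_of_mul_fixes hf hg (h x h1 h2 h3)).2⟩

theorem ExtendsXi.of_mul {n a b : ℕ} {f g : PTrans} (hf : DecrOn n f) (hg : DecrOn n g)
    (h : ExtendsXi a b (f * g)) : ExtendsXi a b f ∨ ExtendsXi a b g := by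
  obtain ⟨hb, hfix⟩ := h
  have hfix' := fun x h1 h2 => fixes_of_mul_fixes hf hg (hfix x h1 h2)
  obtain ⟨y, hy, hya⟩ := mul_eq_some_iff.1 hb
  have h1 := hf _ _ hy
  have h2 := hg _ _ hya
  rcases h1.2.1.lt_or_eq with hlt | rfl
  · left
    have := (hfix' y h2.2.1 hlt).2
    obtain rfl : a = y := Option.some.inj (hya.symm.trans this)
    exact ⟨hy, fun x h1 h2 => (hfix' x h1 h2).1⟩
  · exact Or.inr ⟨hya, fun x h1 h2 => (hfix' x h1 h2).2⟩

theorem ExtendsGamma.of_mul {n p q : ℕ} {f g : PTrans} (hf : f ∈ PORD n) (hg : g ∈ PORD n)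
    (hp : 1 ≤ p) (hpq : p + 2 ≤ q) (hq : q ≤ n) (h : ExtendsGamma n p q (f * g)) :
    ExtendsGamma n p q f ∨ ExtendsGamma n p q g := by
  rw [mem_PORD_iff] at hf hg
  obtain ⟨hf, ho⟩ := hf
  obtain ⟨hg, -⟩ := hg
  obtain ⟨hP, hQ⟩ := h
  obtain ⟨hfp, hgp⟩ := fixes_of_mul_fixes hf hg (hP 0 (by omega) (by omega))
  obtain ⟨hfq, hgq⟩ := fixes_of_mul_fixes hf hg (hQ 0 (by omega) (by omega))
  simp only [add_zero] at hfp hfq hgp hgq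
  rcases ho with ho | ho
  · right
    have fP : ∀ i, p + i < q → i < p → f (p + i) = some (p + i) := by
      intro i
      induction i with
      | zero => exact fun _ _ => hfp
      | succ i ih =>
        intro h1 h2
        have e := ih (by omega) (by omega)
        obtain ⟨u, hu, hgu⟩ := mul_eq_some_iff.1 (hP (i + 1) h1 h2)
        obtain ⟨v, hv, hgv⟩ := mul_eq_some_iff.1 (hP i (by omega) (by omega))
        obtain rfl : v = p + i := Option.some.inj (hv.symm.trans e)
        have hne : u ≠ p + i := by
          rintro rfl
          have := Option.some.inj (hgv.symm.trans hgu)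
          omega
        have h3 := hf _ _ hu
        have h4 := ho le_rfl (by omega : p + i ≤ p + (i + 1)) (by omega) e e hu hfq
        unfold CycMono at h4
        rw [hu, show u = p + (i + 1) by omega]
    have fQ : ∀ j, p + j < q → q + j ≤ n → f (q + j) = some (q + j) := by
      intro j
      induction j with
      | zero => exact fun _ _ => hfq
      | succ j ih =>
        intro h1 h2
        have e := ih (by omega) (by omega)
        obtain ⟨u, hu, hgu⟩ := mul_eq_some_iff.1 (hQ (j + 1) h1 h2)
        obtain ⟨v, hv, hgv⟩ := mul_eq_some_iff.1 (hQ j (by omega) (by omega))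
        obtain rfl : v = q + j := Option.some.inj (hv.symm.trans e)
        have hne : u ≠ q + j := by
          rintro rfl
          have := Option.some.inj (hgv.symm.trans hgu)
          omega
        have h3 := hf _ _ hu
        have h4 := hg _ _ hgu
        have h5 := ho le_rfl (by omega : p ≤ q + j) (by omega : q + j ≤ q + (j + 1)) hfp hfp e hu
        unfold CycMono at h5
        rw [hu, show u = q + (j + 1) by omega]
    refine ⟨fun i h1 h2 => ?_, fun j h1 h2 => ?_⟩
    · obtain ⟨u, hu, hgu⟩ := mul_eq_some_iff.1 (hP i h1 h2)
      obtain rfl : u = p + i := Option.some.inj (hu.symm.trans (fP i h1 h2))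
      exact hgu
    · obtain ⟨u, hu, hgu⟩ := mul_eq_some_iff.1 (hQ j h1 h2)
      obtain rfl : u = q + j := Option.some.inj (hu.symm.trans (fQ j h1 h2))
      exact hgu
  · left
    refine ⟨fun i => ?_, fun j => ?_⟩
    · induction i with
      | zero => exact fun _ _ => hfp
      | succ i ih =>
        intro h1 h2
        have e := ih (by omega) (by omega)
        obtain ⟨u, hu, hgu⟩ := mul_eq_some_iff.1 (hP (i + 1) h1 h2)
        obtain ⟨v, hv, hgv⟩ := mul_eq_some_iff.1 (hP i (by omega) (by omega))
        obtain rfl : v = p - i := Option.some.inj (hv.symm.trans e)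
        have hne : u ≠ p - i := by
          rintro rfl
          have := Option.some.inj (hgv.symm.trans hgu)
          omega
        have h3 := hf _ _ hu
        have h4 := hg _ _ hgu
        have h5 := ho le_rfl (by omega : p + i ≤ p + (i + 1)) (by omega) e e hu hfq
        unfold CycMono at h5
        rw [hu, show u = p - (i + 1) by omega]
    · induction j with
      | zero => exact fun _ _ => hfq
      | succ j ih =>
        intro h1 h2
        have e := ih (by omega) (by omega)
        obtain ⟨u, hu, hgu⟩ := mul_eq_some_iff.1 (hQ (j + 1) h1 h2)
        obtain ⟨v, hv, hgv⟩ := mul_eq_some_iff.1 (hQ j (by omega) (by omega))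
        obtain rfl : v = q - j := Option.some.inj (hv.symm.trans e)
        have hne : u ≠ q - j := by
          rintro rfl
          have := Option.some.inj (hgv.symm.trans hgu)
          omega
        have h3 := hf _ _ hu
        have h4 := hg _ _ hgu
        have h5 := ho le_rfl (by omega : p ≤ q + j) (by omega : q + j ≤ q + (j + 1)) hfp hfp e hu
        unfold CycMono at h5
        rw [hu, show u = q - (j + 1) by omega]

theorem mem_block_or_of_mul_mem {n : ℕ} {i : ℕ × ℕ} (hi : i ∈ genIndex n) {f g : PTrans}
    (hf : f ∈ PORD n) (hg : g ∈ PORD n) (h : f * g ∈ block n i) :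
    f ∈ block n i ∨ g ∈ block n i := by
  have hdf := (mem_PORD_iff.1 hf).1
  have hdg := (mem_PORD_iff.1 hg).1
  rcases genIndex_cases hi with ⟨-, -, hb⟩ | ⟨b, h1, h2, -, -, hb⟩ | ⟨a, b, h1, h2, h3, -, -, hb⟩
    | ⟨b, h1, h2, -, -, hb⟩ | ⟨p, q, h1, h2, h3, -, -, -, hb⟩
  · rw [hb] at h ⊢
    exact Or.inl (FixesOff.of_mul hdf hdg h).1
  · rw [hb] at h ⊢
    obtain ⟨hF, hG⟩ := FixesOff.of_mul hdf hdg h.1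
    obtain ⟨y, hy, hyb⟩ := mul_eq_some_iff.1 h.2
    have hby := hdf _ _ hy
    by_cases hne : y = b
    · subst hne
      exact Or.inr ⟨hG, hyb⟩
    · have := Option.some.inj (hyb.symm.trans (hG y hby.1 (by omega) hne))
      exact Or.inl ⟨hF, by rw [hy, this]⟩
  · rw [hb] at h ⊢
    exact ExtendsXi.of_mul hdf hdg h
  · rw [hb] at h ⊢
    obtain ⟨hF, hG⟩ := FixesOff.of_mul hdf hdg h.1
    cases hy : f b with
    | none => exact Or.inl ⟨hF, hy⟩
    | some y =>
      have hby := hdf _ _ hy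
      have hgy : g y = none := by
        by_contra hne
        have := h.2.symm.trans (mul_eq_some_iff.2 ⟨y, hy, eq_some_val hne⟩)
        cases this
      by_cases hne : y = b
      · subst hne
        exact Or.inr ⟨hG, hgy⟩
      · have := (hG y hby.1 (by omega) hne).symm.trans hgy
        cases this
  · rw [hb] at h ⊢
    exact ExtendsGamma.of_mul hf hg h1 h2 h3 h

theorem ExtendsXi.eq_of_extendsXi {n a b a' b' : ℕ} {f : PTrans} (hf : f ∈ PORD n)
    (hab : a + 2 ≤ b) (hab' : a' + 2 ≤ b') (h : ExtendsXi a b f) (h' : ExtendsXi a' b' f) :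
    a = a' ∧ b = b' := by
  have key : ∀ {a b a' b' : ℕ}, a + 2 ≤ b → a' + 2 ≤ b' → ExtendsXi a b f → ExtendsXi a' b' f →
      ¬ b < b' := by
    intro a b a' b' hab hab' h h' hlt
    have ha' : b < a' := by
      by_contra hle
      have := Option.some.inj (h.1.symm.trans (h'.2 b (not_lt.1 hle) hlt))
      omega
    have e1 := h.2 a le_rfl (by omega)
    have e2 := h.2 (a + 1) (by omega) (by omega)
    have e3 := h'.2 a' le_rfl (by omega)
    have e4 := h'.2 (a' + 1) (by omega) (by omega)
    rcases (mem_PORD_iff.1 hf).2 with ho | ho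
    · have := ho (by omega) (by omega) (by omega) e2 h.1 e4 h'.1
      unfold CycMono at this
      omega
    · have := ho (by omega) (by omega) (by omega) e1 e2 e3 e4
      unfold CycMono at this
      omega
  have h1 := key hab hab' h h'
  have h2 := key hab' hab h' h
  obtain rfl : b = b' := by omega
  exact ⟨Option.some.inj (h.1.symm.trans h'.1), rfl⟩

theorem ExtendsGamma.exists_drop {n p q : ℕ} {f : PTrans} (hp : 1 ≤ p) (hpq : p + 2 ≤ q)
    (hq : q ≤ n) (hne : ¬ (q = n ∧ p = 1)) (h : ExtendsGamma n p q f) :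
    f p = some p ∧ f q = some q ∧
      (f (p + 1) = some (p - 1) ∧ 2 ≤ p ∨ f (q + 1) = some (q - 1) ∧ q < n) := by
  refine ⟨h.1 0 (by omega) (by omega), h.2 0 (by omega) (by omega), ?_⟩
  by_cases hp2 : 2 ≤ p
  · exact Or.inl ⟨h.1 1 (by omega) (by omega), hp2⟩
  · exact Or.inr ⟨h.2 1 (by omega) (by omega), by omega⟩

theorem ExtendsGamma.eq_of_fixes {n p q x : ℕ} {f : PTrans} (hf : f ∈ PORD n) (hp : 1 ≤ p)
    (hpq : p + 2 ≤ q) (hq : q ≤ n) (hne : ¬ (q = n ∧ p = 1)) (h : ExtendsGamma n p q f)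
    (hx : f x = some x) : x = p ∨ x = q := by
  obtain ⟨hfp, hfq, hdrop⟩ := h.exists_drop hp hpq hq hne
  rcases (mem_PORD_iff.1 hf).2 with ho | ho
  · rcases hdrop with ⟨h1, h2⟩ | ⟨h1, h2⟩
    · have := ho le_rfl (by omega) (by omega) hfp hfp h1 hfq
      unfold CycMono at this
      omega
    · have := ho le_rfl (by omega) (by omega) hfp hfp hfq h1
      unfold CycMono at this
      omega
  · by_contra hcon
    rcases lt_or_ge x p with hlt | hge
    · have := ho le_rfl hlt.le (by omega) hx hx hfp hfq
      unfold CycMono at this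
      omega
    · rcases lt_or_ge x q with hlt | hge'
      · have := ho le_rfl hge hlt.le hfp hfp hx hfq
        unfold CycMono at this
        omega
      · have := ho le_rfl (by omega) hge' hfp hfp hfq hx
        unfold CycMono at this
        omega

theorem eq_of_mem_blocks {n : ℕ} {i j : ℕ × ℕ} (hi : i ∈ genIndex n) (hj : j ∈ genIndex n)
    {f : PTrans} (hf : f ∈ PORD n) (hfi : f ∈ block n i) (hfj : f ∈ block n j) : i = j := by
  have drop_xi : ∀ {a b}, 1 ≤ a → a + 2 ≤ b → b ≤ n → ExtendsXi a b f →
      ∃ x y, 1 ≤ x ∧ x ≤ n ∧ f x = some y ∧ y + 2 ≤ x :=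
    fun h1 h2 h3 h => ⟨_, _, by omega, h3, h.1, h2⟩
  have drop_gamma : ∀ {p q}, 1 ≤ p → p + 2 ≤ q → q ≤ n → ¬ (q = n ∧ p = 1) →
      ExtendsGamma n p q f → ∃ x y, 1 ≤ x ∧ x ≤ n ∧ f x = some y ∧ y + 2 ≤ x := by
    intro p q h1 h2 h3 h4 h
    rcases (h.exists_drop h1 h2 h3 h4).2.2 with ⟨h5, h6⟩ | ⟨h5, h6⟩
    · exact ⟨_, _, by omega, by omega, h5, by omega⟩
    · exact ⟨_, _, by omega, by omega, h5, by omega⟩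
  have no_drop : ∀ {b}, FixesOff n b f → (∀ y, f b = some y → b ≤ y + 1) →
      ¬ ∃ x y, 1 ≤ x ∧ x ≤ n ∧ f x = some y ∧ y + 2 ≤ x := by
    rintro b h hb ⟨x, y, h1, h2, h3, h4⟩
    by_cases hxb : x = b
    · subst hxb
      have := hb y h3
      omega
    · have := Option.some.inj (h3.symm.trans (h x h1 h2 hxb))
      omega
  have no_drop_id : FixesOff n 0 f → ¬ ∃ x y, 1 ≤ x ∧ x ≤ n ∧ f x = some y ∧ y + 2 ≤ x :=
    fun h => no_drop h fun y _ => by omega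
  have no_drop_delta : ∀ {b}, FixesOff n b f ∧ f b = some (b - 1) →
      ¬ ∃ x y, 1 ≤ x ∧ x ≤ n ∧ f x = some y ∧ y + 2 ≤ x :=
    fun h => no_drop h.1 fun y hy => by
      have := Option.some.inj (hy.symm.trans h.2)
      omega
  have no_drop_none : ∀ {b}, FixesOff n b f ∧ f b = none →
      ¬ ∃ x y, 1 ≤ x ∧ x ≤ n ∧ f x = some y ∧ y + 2 ≤ x :=
    fun h => no_drop h.1 fun y hy => by
      have := hy.symm.trans h.2
      cases this
  have id_delta : ∀ {b}, 2 ≤ b → b ≤ n → FixesOff n 0 f → ¬ (FixesOff n b f ∧ f b = some (b - 1)) :=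
    fun h1 h2 h h' => by
      have := Option.some.inj (h'.2.symm.trans (h _ (by omega) h2 (by omega)))
      omega
  have fix_none : ∀ {b c}, 1 ≤ b → b ≤ n → b ≠ c → FixesOff n c f →
      ¬ (FixesOff n b f ∧ f b = none) := fun h1 h2 h3 h h' => by
    have := h'.2.symm.trans (h _ h1 h2 h3)
    cases this
  have delta_none : ∀ {b c}, 2 ≤ b → b ≤ n → 1 ≤ c → c ≤ n →
      (FixesOff n b f ∧ f b = some (b - 1)) → ¬ (FixesOff n c f ∧ f c = none) := by
    intro b c h1 h2 h3 h4 h h'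
    by_cases hbc : c = b
    · subst hbc
      have := h'.2.symm.trans h.2
      cases this
    · exact fix_none h3 h4 hbc h.1 h'
  have xi_gamma : ∀ {a b p q}, a + 2 ≤ b → 1 ≤ p → p + 2 ≤ q → q ≤ n → ¬ (q = n ∧ p = 1) →
      ExtendsXi a b f → ¬ ExtendsGamma n p q f := by
    intro a b p q hab h1 h2 h3 h4 h h'
    have e1 := h'.eq_of_fixes hf h1 h2 h3 h4 (h.2 a le_rfl (by omega))
    have e2 := h'.eq_of_fixes hf h1 h2 h3 h4 (h.2 (a + 1) (by omega) (by omega))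
    omega
  rcases genIndex_cases hi with ⟨ei, -, hb⟩ | ⟨b, h1, h2, ei, -, hb⟩ |
    ⟨a, b, h1, h2, h3, ei, -, hb⟩ | ⟨b, h1, h2, ei, -, hb⟩ | ⟨p, q, h1, h2, h3, h4, ei, -, hb⟩ <;>
  rcases genIndex_cases hj with ⟨ej, -, hb'⟩ | ⟨b', h1', h2', ej, -, hb'⟩ |
    ⟨a', b', h1', h2', h3', ej, -, hb'⟩ | ⟨b', h1', h2', ej, -, hb'⟩ |
    ⟨p', q', h1', h2', h3', h4', ej, -, hb'⟩ <;>
  rw [hb] at hfi <;> rw [hb'] at hfj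
  · rw [ei, ej]
  · exact absurd hfj (id_delta h1' h2' hfi)
  · exact absurd (drop_xi h1' h2' h3' hfj) (no_drop_id hfi)
  · exact absurd hfj (fix_none h1' h2' (by omega) hfi)
  · exact absurd (drop_gamma h1' h2' h3' h4' hfj) (no_drop_id hfi)
  · exact absurd hfi (id_delta h1 h2 hfj)
  · have hbb : b = b' := by
      by_contra hne
      have := Option.some.inj (hfi.2.symm.trans (hfj.1 b (by omega) h2 hne))
      omega
    rw [ei, ej, hbb]
  · exact absurd (drop_xi h1' h2' h3' hfj) (no_drop_delta hfi)
  · exact absurd hfj (delta_none h1 h2 h1' h2' hfi)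
  · exact absurd (drop_gamma h1' h2' h3' h4' hfj) (no_drop_delta hfi)
  · exact absurd (drop_xi h1 h2 h3 hfi) (no_drop_id hfj)
  · exact absurd (drop_xi h1 h2 h3 hfi) (no_drop_delta hfj)
  · obtain ⟨rfl, rfl⟩ := ExtendsXi.eq_of_extendsXi hf h2 h2' hfi hfj
    rw [ei, ej]
  · exact absurd (drop_xi h1 h2 h3 hfi) (no_drop_none hfj)
  · exact absurd hfj (xi_gamma h2 h1' h2' h3' h4' hfi)
  · exact absurd hfi (fix_none h1 h2 (by omega) hfj)
  · exact absurd hfi (delta_none h1' h2' h1 h2 hfj)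
  · exact absurd (drop_xi h1' h2' h3' hfj) (no_drop_none hfi)
  · have hbb : b = b' := by
      by_contra hne
      exact fix_none h1 h2 hne hfj.1 hfi
    subst hbb
    rcases ei with ⟨e1, e2⟩ | ⟨e1, e2⟩ <;> rcases ej with ⟨e3, e4⟩ | ⟨e3, e4⟩
    · rw [e2, e4]
    · omega
    · omega
    · rw [e2, e4]
  · exact absurd (drop_gamma h1' h2' h3' h4' hfj) (no_drop_none hfi)
  · exact absurd (drop_gamma h1 h2 h3 h4 hfi) (no_drop_id hfj)
  · exact absurd (drop_gamma h1 h2 h3 h4 hfi) (no_drop_delta hfj)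
  · exact absurd hfi (xi_gamma h2' h1 h2 h3 h4 hfj)
  · exact absurd (drop_gamma h1 h2 h3 h4 hfi) (no_drop_none hfj)
  · obtain ⟨hp, hq, -⟩ := ExtendsGamma.exists_drop h1 h2 h3 h4 hfi
    have e1 := ExtendsGamma.eq_of_fixes hf h1' h2' h3' h4' hfj hp
    have e2 := ExtendsGamma.eq_of_fixes hf h1' h2' h3' h4' hfj hq
    rw [ei, ej, show p = p' by omega, show q = q' by omega]

theorem exists_mem_block {n : ℕ} (hn : 3 ≤ n) {A : Set PTrans} (hA : IsGenSet (PORD n) A)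
    {i : ℕ × ℕ} (hi : i ∈ genIndex n) : ∃ f ∈ A, f ∈ block n i := by
  by_contra hcon
  push Not at hcon
  have hgen : gen n i ∈ Subsemigroup.closure A := by
    rw [← SetLike.mem_coe, hA.2]
    exact gen_mem_PORD hn hi
  have := Subsemigroup.closure_induction (p := fun f _ => f ∈ PORD n ∧ f ∉ block n i)
    (fun f hf => ⟨hA.1 hf, hcon f hf⟩)
    (fun f g _ _ hf hg => ⟨mul_mem_PORD hf.1 hg.1, fun h =>
      (mem_block_or_of_mul_mem hi hf.1 hg.1 h).elim hf.2 hg.2⟩) hgen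
  exact this.2 (gen_mem_block hi)

theorem le_ncard_of_isGenSet {n : ℕ} (hn : 3 ≤ n) {A : Set PTrans} (hA : IsGenSet (PORD n) A) :
    n ^ 2 - n + 1 ≤ A.ncard := by
  have hfin : A.Finite := (finite_PORD n).subset hA.1
  have hex : ∀ i : ℕ × ℕ, ∃ f, i ∈ genIndex n → f ∈ A ∧ f ∈ block n i := fun i => by
    by_cases hi : i ∈ genIndex n
    · obtain ⟨f, hf⟩ := exists_mem_block hn hA hi
      exact ⟨f, fun _ => hf⟩
    · exact ⟨gen n i, fun h => absurd h hi⟩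
  choose F hF using hex
  rw [← card_genIndex, ← Set.ncard_coe_finset]
  refine Set.ncard_le_ncard_of_injOn F (fun i hi => (hF i hi).1) (fun i hi j hj hij => ?_) hfin
  exact eq_of_mem_blocks hi hj (hA.1 (hF i hi).1) (hF i hi).2 (hij ▸ (hF j hj).2)

end OrientedPT

open OrientedPT in
/-- For `n ≥ 4`, `rank(PORD_n) = n² − n + 1`. -/
theorem rank_PORD (n : ℕ) (hn : 4 ≤ n) :
    rank (PORD n) = n ^ 2 - n + 1 := by
  have hgen := isGenSet_gen (n := n) (by omega)
  have hmem : (gen n '' (genIndex n : Set (ℕ × ℕ))).ncard ∈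
      {k | ∃ A : Set PTrans, IsGenSet (PORD n) A ∧ A.ncard = k} := ⟨_, hgen, rfl⟩
  apply le_antisymm
  · refine (Nat.sInf_le hmem).trans ?_
    rw [← card_genIndex, ← Set.ncard_coe_finset]
    exact Set.ncard_image_le (Finset.finite_toSet _)
  · refine le_csInf ⟨_, hmem⟩ ?_
    rintro _ ⟨A, hA, rfl⟩
    exact le_ncard_of_isGenSet (by omega) hA
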